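/- Let n ≥ 1 and let λ/μ be a skew shape with n dividing |λ| − |μ|, and write d = (|λ| − |μ|)/n. Then, as an identity in ℤ[q,q^{−1}][x_1,…,x_r,y_{1′},…,y_{s′}], G_{λ/μ}(X/Y;q) = (−1)^d · q^{(n−1)d} · G_{λ′/μ′}(Y/X;q^{−1}), where λ′, μ′ are the conjugate (transposed) partitions, and on the right-hand side the roles of the alphabets are exchanged: the horizontal alphabet has s letters carrying the variables y_{1′},…,y_{s′} and the vertical alphabet has r letters carrying the variables x_1,…,x_r. -/

import Mathlib

/-!
The formula follows from the order independence of super LLT polynomials, because transposition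
already proves it for suitably matched orders.  Reflecting a tableau in the main diagonal sends
ribbons to ribbons, exchanges tails and heads (so horizontal strips become vertical strips and
conversely), and turns a ribbon of spin `h` into one of spin `n - 1 - h`; each ribbon therefore
contributes a factor `-q ^ (n - 1)`, and there are `d` ribbons.  This is `superLLT_transpose`,
where the order on the one alphabet is transported to the other.

Order independence (`superLLT_order_indep`) is proved with ribbon operators.  A Young diagram is
encoded by its boundary function `rho`, which records where each diagonal leaves the diagram; the
operator `ribOp n q p` adds an `n`-ribbon with tail on the diagonal `p`, weighted by `q` to the
power its spin.  Adding a horizontal strip amounts to adding ribbons in increasing order of their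
tails, and adding a vertical strip to adding them in decreasing order (`isTab_iff_isFlat`).  Hence
a super LLT polynomial is a matrix coefficient of a product over the letters of
`⋯ (1 + x u₁)(1 + x u₀)` for a horizontal letter, and `(1 - y u₀)(1 - y u₁) ⋯` for a vertical one
(`superLLT_eq_letterOp`).  It remains to see that all these factors commute.

The operators satisfy the relations `RibbonRelations`: they commute when the tails are more than
`n` apart, commute up to `q ^ 2` when the tails are less than `n` apart, and satisfy `u u = 0` and
nil-Temperley–Lieb relations at distance `n`.  The commutation of a descending product with an
ascending one (`desc_asc_comm`) is shown by adjoining one operator at a time; the step rests on the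
identity `asc_desc_identity` for `Q`-commuting, square-zero elements.  Since an ascending product
with parameter `y` is inverse to the descending one with parameter `-y`, the other two
commutations follow.
-/

open Finset

namespace SuperLLT

/-- Two cells in `ℕ × ℕ` are adjacent if they share an edge. -/
def Adj (c d : ℕ × ℕ) : Prop :=
  (c.1 = d.1 ∧ (c.2 + 1 = d.2 ∨ d.2 + 1 = c.2)) ∨
    (c.2 = d.2 ∧ (c.1 + 1 = d.1 ∨ d.1 + 1 = c.1))

/-- A finite set of cells is connected if any two of its cells are joined by a path of
adjacent cells staying inside the set. -/
def ConnectedCells (s : Finset (ℕ × ℕ)) : Prop :=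
  ∀ c ∈ s, ∀ d ∈ s, Relation.ReflTransGen (fun a b => a ∈ s ∧ b ∈ s ∧ Adj a b) c d

/-- A set of cells is (the set of cells of) a skew shape if it is the difference of two
Young diagrams. -/
def IsSkewCells (s : Finset (ℕ × ℕ)) : Prop :=
  ∃ μ lam : YoungDiagram, μ ≤ lam ∧ s = lam.cells \ μ.cells

/-- The set of cells contains no 2×2 square. -/
def NoTwoByTwo (s : Finset (ℕ × ℕ)) : Prop :=
  ∀ i j : ℕ, ¬((i, j) ∈ s ∧ (i + 1, j) ∈ s ∧ (i, j + 1) ∈ s ∧ (i + 1, j + 1) ∈ s)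

/-- An `n`-ribbon: a connected skew shape with `n` cells containing no 2×2 square. -/
def IsRibbon (n : ℕ) (s : Finset (ℕ × ℕ)) : Prop :=
  s.card = n ∧ IsSkewCells s ∧ ConnectedCells s ∧ NoTwoByTwo s

/-- The spin of a ribbon: its number of rows minus one. -/
def spin (s : Finset (ℕ × ℕ)) : ℕ :=
  (s.image Prod.fst).card - 1

/-- The top-right-most cell of a ribbon: minimal row index, maximal column in that row. -/
def topRight (s : Finset (ℕ × ℕ)) : ℕ × ℕ :=
  ((s.image Prod.fst).min.getD 0,
    ((s.filter fun c => c.1 = (s.image Prod.fst).min.getD 0).image Prod.snd).max.getD 0)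

/-- The bottom-left-most cell of a ribbon: maximal row index, minimal column in that row. -/
def bottomLeft (s : Finset (ℕ × ℕ)) : ℕ × ℕ :=
  ((s.image Prod.fst).max.getD 0,
    ((s.filter fun c => c.1 = (s.image Prod.fst).max.getD 0).image Prod.snd).min.getD 0)

/-- The cell `c` of the strip with cell set `strip` touches the northern boundary of the
strip: the cell directly above `c` is not a cell of the strip. -/
def TouchesNorth (strip : Finset (ℕ × ℕ)) (c : ℕ × ℕ) : Prop :=
  c.1 = 0 ∨ (c.1 - 1, c.2) ∉ strip

/-- The cell `c` lies along the (upper-left) boundary of the strip: the cell directly to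
the left of `c` is not a cell of the strip.  This is the condition on the bottom-left-most
box of each ribbon of a vertical ribbon strip (equivalently, flipping a vertical strip over
the antidiagonal produces a horizontal strip whose ribbon heads touch the northern
boundary). -/
def TouchesWest (strip : Finset (ℕ × ℕ)) (c : ℕ × ℕ) : Prop :=
  c.2 = 0 ∨ (c.1, c.2 - 1) ∉ strip

/-- `tiles` is a tiling of the cell set `cells` by `n`-ribbons. -/
def IsTilingOf (n : ℕ) (cells : Finset (ℕ × ℕ)) (tiles : Finset (Finset (ℕ × ℕ))) : Prop :=
  (∀ t ∈ tiles, IsRibbon n t) ∧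
    (∀ t ∈ tiles, ∀ t' ∈ tiles, t ≠ t' → Disjoint t t') ∧
    tiles.sup id = cells

/-- A horizontal `n`-ribbon strip tiling: the top-right-most box of every ribbon touches
the northern boundary of the strip. -/
def IsHorizontalTiling (n : ℕ) (cells : Finset (ℕ × ℕ))
    (tiles : Finset (Finset (ℕ × ℕ))) : Prop :=
  IsTilingOf n cells tiles ∧ ∀ t ∈ tiles, TouchesNorth cells (topRight t)

/-- A vertical `n`-ribbon strip tiling: the bottom-left-most box of every ribbon lies on
the (north-west) boundary of the strip. -/
def IsVerticalTiling (n : ℕ) (cells : Finset (ℕ × ℕ))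
    (tiles : Finset (Finset (ℕ × ℕ))) : Prop :=
  IsTilingOf n cells tiles ∧ ∀ t ∈ tiles, TouchesWest cells (bottomLeft t)

open scoped Classical in
/-- `T` is a super `n`-ribbon tableau of shape `lam / μ`: a set of `n`-ribbons, each
labelled by a letter of `L`, tiling `lam / μ`, such that for every letter `i` the union of
`μ` with the ribbons labelled `≼ i` (with respect to the total order `le` on `L`) is a
partition shape, the ribbons with a fixed label `a` with `horiz a` form a horizontal
ribbon strip, and the ribbons with a fixed label `b` with `¬ horiz b` form a vertical
ribbon strip. -/
def IsSuperTableau (n : ℕ) (μ lam : YoungDiagram) {L : Type*}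
    (le : L → L → Prop) (horiz : L → Prop) (T : Finset (Finset (ℕ × ℕ) × L)) : Prop :=
  μ ≤ lam ∧
    (∀ p ∈ T, IsRibbon n p.1) ∧
    (∀ p ∈ T, ∀ p' ∈ T, p ≠ p' → Disjoint p.1 p'.1) ∧
    (T.sup fun p => p.1) = lam.cells \ μ.cells ∧
    (∀ i : L, ∃ ν : YoungDiagram,
      ν.cells = μ.cells ∪ ((T.filter fun p => le p.2 i).sup fun p => p.1)) ∧
    (∀ p ∈ T,
      (horiz p.2 →
        TouchesNorth ((T.filter fun p' => p'.2 = p.2).sup fun p' => p'.1) (topRight p.1)) ∧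
      (¬horiz p.2 →
        TouchesWest ((T.filter fun p' => p'.2 = p.2).sup fun p' => p'.1) (bottomLeft p.1)))

open scoped Classical in
/-- The (finite) set of all super `n`-ribbon tableaux of shape `lam / μ` with letters in
`L`. -/
noncomputable def superTableaux (n : ℕ) (μ lam : YoungDiagram) (L : Type*) [Fintype L]
    (le : L → L → Prop) (horiz : L → Prop) : Finset (Finset (Finset (ℕ × ℕ) × L)) :=
  ((lam.cells \ μ.cells).powerset ×ˢ (Finset.univ : Finset L)).powerset.filter
    (IsSuperTableau n μ lam le horiz)

/-- The spin of a tableau: the sum of the spins of its ribbons. -/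
def tabSpin {L : Type*} (T : Finset (Finset (ℕ × ℕ) × L)) : ℕ :=
  ∑ p ∈ T, spin p.1

open scoped Classical in
/-- The number of ribbons of the tableau `T` labelled `a`. -/
noncomputable def tabWt {L : Type*} (T : Finset (Finset (ℕ × ℕ) × L)) (a : L) : ℕ :=
  (T.filter fun p => p.2 = a).card

open scoped Classical in
/-- The super LLT polynomial `G_{lam/μ}(X/Y; q)`, evaluated in a commutative ring `R`:
`q` is the spin parameter and `z a` is the variable attached to the letter `a`; a ribbon
labelled by a horizontal letter `a` contributes a factor `z a`, and one labelled by a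
vertical letter `b` contributes `-(z b)`.  (It is `0` if `¬ μ ≤ lam`.) -/
noncomputable def superLLT (n : ℕ) (μ lam : YoungDiagram) (L : Type*) [Fintype L]
    (le : L → L → Prop) (horiz : L → Prop) {R : Type*} [CommRing R] (q : R) (z : L → R) :
    R :=
  ∑ T ∈ superTableaux n μ lam L le horiz,
    q ^ tabSpin T * ∏ a : L, (if horiz a then z a else -z a) ^ tabWt T a

/-- The total order on `Fin r ⊕ Fin s` in which all letters of the first alphabet precede
all letters of the second alphabet. -/
def sumLe {r s : ℕ} : Fin r ⊕ Fin s → Fin r ⊕ Fin s → Prop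
  | Sum.inl i, Sum.inl j => i ≤ j
  | Sum.inl _, Sum.inr _ => True
  | Sum.inr _, Sum.inl _ => False
  | Sum.inr i, Sum.inr j => i ≤ j

end SuperLLT

/-! ### Commuting products from ribbon relations -/

namespace SuperLLT

section Algebra

variable {R A : Type*} [CommRing R] [Ring A] [Algebra R A]

/-- The ascending product `(1 + y v₀)(1 + y v₁) ⋯ (1 + y v_{k-1})`. -/
def ascProd (v : ℕ → A) (y : R) : ℕ → A
  | 0 => 1
  | k + 1 => ascProd v y k * (1 + y • v k)

/-- The descending product `(1 + x v_{k-1}) ⋯ (1 + x v₁)(1 + x v₀)`. -/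
def descProd (v : ℕ → A) (x : R) : ℕ → A
  | 0 => 1
  | k + 1 => (1 + x • v k) * descProd v x k

lemma ascProd_add (v : ℕ → A) (y : R) (j k : ℕ) :
    ascProd v y (j + k) = ascProd v y j * ascProd (fun i => v (j + i)) y k := by
  induction k with
  | zero => simp [ascProd]
  | succ k ih => rw [← add_assoc]; simp only [ascProd, ih, mul_assoc]

lemma descProd_add (v : ℕ → A) (x : R) (j k : ℕ) :
    descProd v x (j + k) = descProd (fun i => v (j + i)) x k * descProd v x j := by
  induction k with
  | zero => simp [descProd]
  | succ k ih => rw [← add_assoc]; simp only [descProd, ih, mul_assoc]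

lemma mul_ascProd (c : A) (Q : R) (v : ℕ → A) (y : R) (k : ℕ)
    (h : ∀ i < k, c * v i = Q • (v i * c)) :
    c * ascProd v y k = ascProd v (Q * y) k * c := by
  induction k with
  | zero => simp [ascProd]
  | succ k ih =>
    have h1 : c * (1 + y • v k) = (1 + (Q * y) • v k) * c := by
      rw [mul_add, add_mul, mul_smul_comm, h k (by omega), smul_smul, smul_mul_assoc, mul_comm y]
      simp
    simp only [ascProd]
    rw [← mul_assoc, ih fun i hi => h i (by omega), mul_assoc, h1, mul_assoc]

lemma mul_descProd (c : A) (Q : R) (v : ℕ → A) (y : R) (k : ℕ)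
    (h : ∀ i < k, c * v i = Q • (v i * c)) :
    c * descProd v y k = descProd v (Q * y) k * c := by
  induction k with
  | zero => simp [descProd]
  | succ k ih =>
    have h1 : c * (1 + y • v k) = (1 + (Q * y) • v k) * c := by
      rw [mul_add, add_mul, mul_smul_comm, h k (by omega), smul_smul, smul_mul_assoc, mul_comm y]
      simp
    simp only [descProd]
    rw [← mul_assoc, h1, mul_assoc, ih fun i hi => h i (by omega), mul_assoc]

lemma ascProd_mul (c : A) (Q : R) (v : ℕ → A) (y : R) (k : ℕ)
    (h : ∀ i < k, v i * c = Q • (c * v i)) :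
    ascProd v y k * c = c * ascProd v (Q * y) k := by
  induction k with
  | zero => simp [ascProd]
  | succ k ih =>
    have h1 : (1 + y • v k) * c = c * (1 + (Q * y) • v k) := by
      rw [mul_add, add_mul, smul_mul_assoc, h k (by omega), smul_smul, mul_smul_comm, mul_comm y]
      simp
    simp only [ascProd]
    rw [mul_assoc, h1, ← mul_assoc, ih fun i hi => h i (by omega), mul_assoc]

lemma descProd_mul (c : A) (Q : R) (v : ℕ → A) (y : R) (k : ℕ)
    (h : ∀ i < k, v i * c = Q • (c * v i)) :
    descProd v y k * c = c * descProd v (Q * y) k := by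
  induction k with
  | zero => simp [descProd]
  | succ k ih =>
    have h1 : (1 + y • v k) * c = c * (1 + (Q * y) • v k) := by
      rw [mul_add, add_mul, smul_mul_assoc, h k (by omega), smul_smul, mul_smul_comm, mul_comm y]
      simp
    simp only [descProd]
    rw [mul_assoc, ih fun i hi => h i (by omega), ← mul_assoc, h1, mul_assoc]

/-- If `v j * v i = Q • (v i * v j)` for `i < j` and all squares vanish, the products
`P = ascProd` and `S = descProd` satisfy
`x P(Qy) S(Qx) + y P(y) S(x) = (x + y) P(y) S(Qx)`. -/
lemma asc_desc_identity (Q : R) (v : ℕ → A) (k : ℕ) (hsq : ∀ i < k, v i * v i = 0)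
    (hQ : ∀ i j, i < j → j < k → v j * v i = Q • (v i * v j)) (x y : R) :
    x • (ascProd v (Q * y) k * descProd v (Q * x) k) + y • (ascProd v y k * descProd v x k) =
      (x + y) • (ascProd v y k * descProd v (Q * x) k) := by
  induction k generalizing x y with
  | zero => simp [ascProd, descProd, add_smul]
  | succ k ih =>
    have ih' := ih (fun i hi => hsq i (by omega)) (fun i j h h' => hQ i j h (by omega))
    have e1 : ∀ s t : R, (1 + s • v k) * (1 + t • v k) = 1 + (s + t) • v k := by
      intro s t
      simp only [mul_add, add_mul, smul_mul_assoc, mul_smul_comm, hsq k (by omega), mul_one,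
        one_mul, smul_zero, add_zero, add_smul]
      abel
    have e2 : ∀ s t : R, ascProd v s (k + 1) * descProd v t (k + 1) =
        ascProd v s k * descProd v t k + (s + t) • (ascProd v s k * v k * descProd v t k) := by
      intro s t
      simp only [ascProd, descProd]
      calc _ = ascProd v s k * ((1 + s • v k) * (1 + t • v k)) * descProd v t k := by
            noncomm_ring
        _ = _ := by
          rw [e1, mul_add, add_mul, mul_one, mul_smul_comm, smul_mul_assoc]
    rw [e2, e2, e2]
    have hd : ∀ s : R, v k * descProd v s k = descProd v (Q * s) k * v k :=
      fun s => mul_descProd _ Q _ _ _ (fun i hi => hQ i k hi (by omega))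
    have A1 := ih' x y
    have A2 := congrArg (· * v k) (ih' (Q * x) y)
    simp only [mul_assoc, hd, add_mul, smul_mul_assoc] at A1 A2 ⊢
    linear_combination (norm := module) A1 + (x + y) • A2

/-- The exchange step: the last factor `1 + x u` of the descending product moves past the
ascending one.  Here `a` is the only factor whose interplay with `u` is not a
`Q`-commutation. -/
lemma exchange_aux (Q x y : R) (u a : A) (P S : R → A)
    (huu : u * u = 0) (haa : a * a = 0) (hau : a * u * a = 0) (hua : u * a * u = 0)
    (hPu : ∀ s, u * P s = P (Q * s) * u) (hSu : ∀ s, u * S s = S (Q * s) * u)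
    (hPa : ∀ s, P s * a = a * P (Q * s)) (hSa : ∀ s, S s * a = a * S (Q * s))
    (hid : ∀ x y, x • (P (Q * y) * S (Q * x)) + y • (P y * S x) = (x + y) • (P y * S (Q * x))) :
    (1 + (Q * x) • u) * ((1 + (Q * y) • a) * P (Q * y) * (S (Q * x) * (1 + (Q * x) • a))) *
        (1 + (Q * y) • u) =
      (1 + (Q * y) • a) * P (Q * y) * ((1 + (Q * y) • u) * (1 + (Q * x) • u)) *
        (S (Q * x) * (1 + (Q * x) • a)) := by
  have hua' : ∀ b, u * (a * (u * b)) = 0 := fun b => by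
    rw [← mul_assoc, ← mul_assoc, hua, zero_mul]
  have hau' : ∀ b, a * (u * (a * b)) = 0 := fun b => by
    rw [← mul_assoc, ← mul_assoc, hau, zero_mul]
  have huu' : ∀ b, u * (u * b) = 0 := fun b => by rw [← mul_assoc, huu, zero_mul]
  have haa' : ∀ b, a * (a * b) = 0 := fun b => by rw [← mul_assoc, haa, zero_mul]
  have hPu' : ∀ s b, P (Q * s) * (u * b) = u * (P s * b) := fun s b => by
    rw [← mul_assoc, ← hPu, mul_assoc]
  have hPa' : ∀ s b, P s * (a * b) = a * (P (Q * s) * b) := fun s b => by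
    rw [← mul_assoc, hPa, mul_assoc]
  have I1 := congrArg (u * ·) (hid x y)
  have I2 := congrArg (u * a * ·) (hid (Q * x) (Q * y))
  have I3 := congrArg (a * u * ·) (hid x y)
  simp only [mul_add, add_mul, mul_one, one_mul, smul_mul_assoc, mul_smul_comm, mul_assoc,
    ← hSu, ← hPu, hPu', hSa, hPa', huu', haa', huu, hua', hau', smul_zero, add_zero] at I1 I2 I3 ⊢
  linear_combination (norm := module) Q • I1 + (Q * x) • I2 + (Q * y * Q) • I3

/-- The relations of the ribbon operators: `v i` and `v j` commute when
`j > i + n`, commute up to the factor `Q` when `i < j < i + n`, and satisfy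
nil-Temperley–Lieb relations when `j = i + n`; squares vanish. -/
structure RibbonRelations (n : ℕ) (Q : R) (v : ℕ → A) : Prop where
  sq : ∀ i, v i * v i = 0
  qcomm : ∀ i j, i < j → j < i + n → v j * v i = Q • (v i * v j)
  comm : ∀ i j, i + n < j → v j * v i = v i * v j
  low : ∀ i, v i * v (i + n) * v i = 0
  high : ∀ i, v (i + n) * v i * v (i + n) = 0

/-- Adjoining `v (j + n)` to both products: of the earlier factors, those before `v j` commute
with it, those after `v j` commute up to `Q`, and `v j` itself is treated by `exchange_aux`. -/
lemma desc_asc_step (n : ℕ) (hn : 1 ≤ n) (Q Qi : R) (hQ : Q * Qi = 1) (v : ℕ → A)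
    (hv : RibbonRelations n Q v) (x y : R) (j : ℕ) :
    (1 + x • v (j + n)) * (ascProd v y (j + n) * descProd v x (j + n)) * (1 + y • v (j + n)) =
      ascProd v y (j + n) * ((1 + y • v (j + n)) * (1 + x • v (j + n))) *
        descProd v x (j + n) := by
  obtain ⟨k, rfl⟩ : ∃ k, n = 1 + k := ⟨n - 1, by omega⟩
  set u := v (j + (1 + k)) with hu
  set a := v j with ha
  set w : ℕ → A := fun i => v (j + 1 + i) with hw
  have hE : ascProd v y (j + (1 + k)) = ascProd v y j * ((1 + y • a) * ascProd w y k) := by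
    rw [← add_assoc, ascProd_add]; simp only [ascProd, mul_assoc, ← hw, ← ha]
  have hH : descProd v x (j + (1 + k)) = descProd w x k * (1 + x • a) * descProd v x j := by
    rw [← add_assoc, descProd_add]; simp only [descProd, mul_assoc, ← hw, ← ha]
  have cE : u * ascProd v y j = ascProd v y j * u := by
    have := mul_ascProd u (1 : R) v y j
      (fun i hi => by rw [one_smul]; exact hv.comm i _ (by omega))
    simpa using this
  have cH : u * descProd v x j = descProd v x j * u := by
    have := mul_descProd u (1 : R) v x j
      (fun i hi => by rw [one_smul]; exact hv.comm i _ (by omega))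
    simpa using this
  have hx : Q * (Qi * x) = x := by rw [← mul_assoc, hQ, one_mul]
  have hy : Q * (Qi * y) = y := by rw [← mul_assoc, hQ, one_mul]
  have key := exchange_aux Q (Qi * x) (Qi * y) u a (fun s => ascProd w s k)
    (fun s => descProd w s k) (hv.sq _) (hv.sq _) (hv.low j) (hv.high j)
    (fun s => mul_ascProd _ _ _ _ _ fun i hi => hv.qcomm _ _ (by omega) (by omega))
    (fun s => mul_descProd _ _ _ _ _ fun i hi => hv.qcomm _ _ (by omega) (by omega))
    (fun s => ascProd_mul _ _ _ _ _ fun i hi => hv.qcomm _ _ (by omega) (by omega))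
    (fun s => descProd_mul _ _ _ _ _ fun i hi => hv.qcomm _ _ (by omega) (by omega))
    (asc_desc_identity Q w k (fun i _ => hv.sq _)
      (fun i i' h h' => hv.qcomm _ _ (by omega) (by omega)))
  simp only [hx, hy] at key
  have cE' : (1 + x • u) * ascProd v y j = ascProd v y j * (1 + x • u) := by
    rw [mul_add, add_mul, smul_mul_assoc, mul_smul_comm, cE]; simp
  have cH' : descProd v x j * (1 + y • u) = (1 + y • u) * descProd v x j := by
    rw [mul_add, add_mul, smul_mul_assoc, mul_smul_comm, cH]; simp
  rw [hE, hH]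
  calc _ = ((1 + x • u) * ascProd v y j) * ((1 + y • a) * ascProd w y k *
        (descProd w x k * (1 + x • a))) * (descProd v x j * (1 + y • u)) := by
          simp only [mul_assoc]
    _ = ascProd v y j * ((1 + x • u) * ((1 + y • a) * ascProd w y k *
        (descProd w x k * (1 + x • a))) * (1 + y • u)) * descProd v x j := by
          rw [cE', cH']; simp only [mul_assoc]
    _ = _ := by rw [key]; simp only [mul_assoc]

lemma ascProd_eq_one (v : ℕ → A) (y : R) (k : ℕ) (h : ∀ i < k, v i = 0) :
    ascProd v y k = 1 := by
  induction k with
  | zero => rfl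
  | succ k ih => simp [ascProd, ih fun i hi => h i (by omega), h k]

lemma descProd_eq_one (v : ℕ → A) (y : R) (k : ℕ) (h : ∀ i < k, v i = 0) :
    descProd v y k = 1 := by
  induction k with
  | zero => rfl
  | succ k ih => simp [descProd, ih fun i hi => h i (by omega), h k]

/-- Descending and ascending products commute, for all values of the two parameters. -/
lemma desc_asc_comm (n : ℕ) (hn : 1 ≤ n) (Q Qi : R) (hQ : Q * Qi = 1) (v : ℕ → A)
    (hv : RibbonRelations n Q v) (x y : R) (m : ℕ) :
    Commute (descProd v x m) (ascProd v y m) := by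
  -- Padding the sequence with `n` zeros makes the exchange step available from the start.
  set w : ℕ → A := fun i => if i < n then 0 else v (i - n) with hw
  have hwv : (fun i => w (n + i)) = v := by
    funext i; simp [hw]
  have hrel : RibbonRelations n Q w := by
    refine ⟨fun i => ?_, fun i j h1 h2 => ?_, fun i j h1 => ?_, fun i => ?_, fun i => ?_⟩
    · by_cases h : i < n <;> simp [hw, h, hv.sq]
    · by_cases h : i < n
      · simp [hw, h]
      · simp only [hw, h, show ¬ j < n by omega, if_false]
        exact hv.qcomm _ _ (by omega) (by omega)
    · by_cases h : i < n
      · simp [hw, h]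
      · simp only [hw, h, show ¬ j < n by omega, if_false]
        exact hv.comm _ _ (by omega)
    · by_cases h : i < n
      · simp [hw, h]
      · have := hv.low (i - n)
        simpa [hw, h, show i - n + n = i by omega] using this
    · by_cases h : i < n
      · simp [hw, h]
      · have := hv.high (i - n)
        simpa [hw, h, show i - n + n = i by omega] using this
  have h0 : ∀ i < n, w i = 0 := fun i hi => by simp [hw, hi]
  have main : descProd w x (m + n) * ascProd w y (m + n) =
      ascProd w y (m + n) * descProd w x (m + n) := by
    induction m with
    | zero => simp [ascProd_eq_one w y n h0, descProd_eq_one w x n h0]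
    | succ m ih =>
      have e : m + 1 + n = m + n + 1 := by omega
      rw [e]
      simp only [ascProd, descProd]
      calc _ = (1 + x • w (m + n)) * (descProd w x (m + n) * ascProd w y (m + n)) *
            (1 + y • w (m + n)) := by simp only [mul_assoc]
        _ = _ := by
          rw [ih, desc_asc_step n hn Q Qi hQ w hrel]; simp only [mul_assoc]
  rw [add_comm, ascProd_add, descProd_add, ascProd_eq_one w y n h0, descProd_eq_one w x n h0,
    hwv] at main
  rw [one_mul, mul_one] at main
  exact main

/-- As squares vanish, `1 + y v` and `1 - y v` are inverse to each other. -/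
lemma asc_mul_desc_neg (v : ℕ → A) (hsq : ∀ i, v i * v i = 0) (y : R) (m : ℕ) :
    ascProd v y m * descProd v (-y) m = 1 ∧ descProd v (-y) m * ascProd v y m = 1 := by
  have e1 : ∀ (s : R) (i : ℕ), (1 + s • v i) * (1 + (-s) • v i) = 1 := fun s i => by
    simp only [mul_add, add_mul, smul_mul_assoc, mul_smul_comm, hsq, mul_one, one_mul]
    module
  have hl : ∀ m, ascProd v y m * descProd v (-y) m = 1 := by
    intro m
    induction m with
    | zero => simp [ascProd, descProd]
    | succ m ih =>
      simp only [ascProd, descProd]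
      rw [mul_assoc, ← mul_assoc (1 + y • v m), e1, one_mul, ih]
  refine ⟨hl m, ?_⟩
  induction m with
  | zero => simp [ascProd, descProd]
  | succ m ih =>
    simp only [ascProd, descProd]
    rw [mul_assoc, ← mul_assoc (descProd v (-y) m), ih, one_mul]
    simpa using e1 (-y) m

lemma commute_of_inverse {b c d : A} (h : Commute b c) (h1 : c * d = 1) (h2 : d * c = 1) :
    Commute b d := by
  have : d * (b * c) * d = d * (c * b) * d := by rw [h.eq]
  rw [mul_assoc d, mul_assoc b, h1, ← mul_assoc d c, h2] at this
  simpa [Commute, SemiconjBy] using this.symm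

lemma desc_desc_comm (n : ℕ) (hn : 1 ≤ n) (Q Qi : R) (hQ : Q * Qi = 1) (v : ℕ → A)
    (hv : RibbonRelations n Q v) (x y : R) (m : ℕ) :
    Commute (descProd v x m) (descProd v y m) := by
  have := asc_mul_desc_neg v hv.sq (-y) m
  rw [neg_neg] at this
  exact commute_of_inverse (desc_asc_comm n hn Q Qi hQ v hv x (-y) m) this.1 this.2

lemma asc_asc_comm (n : ℕ) (hn : 1 ≤ n) (Q Qi : R) (hQ : Q * Qi = 1) (v : ℕ → A)
    (hv : RibbonRelations n Q v) (x y : R) (m : ℕ) :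
    Commute (ascProd v x m) (ascProd v y m) := by
  have := asc_mul_desc_neg v hv.sq y m
  exact commute_of_inverse (desc_asc_comm n hn Q Qi hQ v hv (-y) x m).symm this.2 this.1

end Algebra
end SuperLLT

/-! ### Ribbon operators -/

namespace SuperLLT

section Operators

variable {R : Type*} [CommRing R]

/-- Add one to `f` on the interval `[p, p + n)`. -/
def bump (n : ℕ) (p : ℤ) (f : ℤ → ℤ) : ℤ → ℤ :=
  fun c => if p ≤ c ∧ c < p + n then f c + 1 else f c

/-- The boundary function `f` allows an `n`-ribbon to be added on the diagonals
`p, …, p + n - 1`. -/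
def Addable (n : ℕ) (p : ℤ) (f : ℤ → ℤ) : Prop :=
  f (p - 1) = f p + 1 ∧ f (p + n - 1) = f (p + n)

lemma bump_of_mem {n : ℕ} {p : ℤ} {f : ℤ → ℤ} {c : ℤ} (h : p ≤ c ∧ c < p + n) :
    bump n p f c = f c + 1 := if_pos h

lemma bump_of_notMem {n : ℕ} {p : ℤ} {f : ℤ → ℤ} {c : ℤ} (h : ¬(p ≤ c ∧ c < p + n)) :
    bump n p f c = f c := if_neg h

lemma bump_comm (n : ℕ) (p p' : ℤ) (f : ℤ → ℤ) :
    bump n p (bump n p' f) = bump n p' (bump n p f) := by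
  funext c
  simp only [bump]
  split_ifs <;> rfl

open scoped Classical in
/-- The ribbon operator on the free module on functions `ℤ → ℤ`: it adds an `n`-ribbon with
tail on the diagonal `p`, weighted by `q` to the power its spin `f p - f (p + n - 1)`. -/
noncomputable def ribOp (n : ℕ) (q : Rˣ) (p : ℤ) : Module.End R ((ℤ → ℤ) →₀ R) :=
  Finsupp.linearCombination R fun f =>
    if Addable n p f then
      Finsupp.single (bump n p f) ((q ^ (f p - f (p + n - 1)) : Rˣ) : R) else 0

lemma ribOp_single_pos {n : ℕ} (q : Rˣ) {p : ℤ} {f : ℤ → ℤ} (h : Addable n p f) (r : R) :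
    ribOp n q p (Finsupp.single f r) =
      (r * ((q ^ (f p - f (p + n - 1)) : Rˣ) : R)) • Finsupp.single (bump n p f) 1 := by
  simp [ribOp, h]

lemma ribOp_single_neg {n : ℕ} (q : Rˣ) {p : ℤ} {f : ℤ → ℤ} (h : ¬Addable n p f) (r : R) :
    ribOp n q p (Finsupp.single f r) = 0 := by
  simp [ribOp, h]

lemma end_ext {F G : Module.End R ((ℤ → ℤ) →₀ R)}
    (h : ∀ f, F (Finsupp.single f 1) = G (Finsupp.single f 1)) : F = G := by
  refine Finsupp.lhom_ext' fun f => LinearMap.ext_ring ?_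
  exact h f

lemma ribOp_sq (n : ℕ) (hn : 1 ≤ n) (q : Rˣ) (p : ℤ) : ribOp n q p * ribOp n q p = 0 := by
  refine end_ext fun f => ?_
  rw [Module.End.mul_apply]
  by_cases h : Addable n p f
  · rw [ribOp_single_pos q h, map_smul, ribOp_single_neg, smul_zero]
    · rfl
    · rintro ⟨h1, -⟩
      rw [bump_of_notMem (by omega), bump_of_mem (by omega)] at h1
      have := h.1
      omega
  · rw [ribOp_single_neg q h, map_zero]; rfl

lemma ribOp_low (n : ℕ) (hn : 1 ≤ n) (q : Rˣ) (p : ℤ) :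
    ribOp n q p * ribOp n q (p + n) * ribOp n q p = 0 := by
  refine end_ext fun f => ?_
  rw [Module.End.mul_apply, Module.End.mul_apply]
  by_cases h : Addable n p f
  · rw [ribOp_single_pos q h, map_smul]
    by_cases h' : Addable n (p + n) (bump n p f)
    · rw [ribOp_single_pos q h', map_smul, map_smul, ribOp_single_neg]
      · simp
      · rintro ⟨h1, -⟩
        rw [bump_of_notMem (by omega), bump_of_notMem (by omega), bump_of_notMem (by omega),
          bump_of_mem (by omega)] at h1
        have := h.1
        omega
    · rw [ribOp_single_neg q h']; simp
  · rw [ribOp_single_neg q h]; simp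

lemma ribOp_high (n : ℕ) (hn : 1 ≤ n) (q : Rˣ) (p : ℤ) :
    ribOp n q (p + n) * ribOp n q p * ribOp n q (p + n) = 0 := by
  refine end_ext fun f => ?_
  rw [Module.End.mul_apply, Module.End.mul_apply]
  by_cases h : Addable n (p + n) f
  · rw [ribOp_single_pos q h, map_smul]
    by_cases h' : Addable n p (bump n (p + n) f)
    · rw [ribOp_single_pos q h', map_smul, map_smul, ribOp_single_neg]
      · simp
      · rintro ⟨-, h1⟩
        rw [bump_of_notMem (by omega), bump_of_mem (by omega), bump_of_notMem (by omega),
          bump_of_notMem (by omega)] at h1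
        have := h.2
        omega
    · rw [ribOp_single_neg q h']; simp
  · rw [ribOp_single_neg q h]; simp

lemma addable_bump_iff {n : ℕ} {p p' : ℤ} (f : ℤ → ℤ)
    (h : (p < p' ∧ p' < p + n) ∨ (p' < p ∧ p < p' + n) ∨ p + n < p' ∨ p' + n < p) :
    Addable n p (bump n p' f) ↔ Addable n p f := by
  simp only [Addable, bump]
  split_ifs <;> omega

lemma ribOp_comm (n : ℕ) (q : Rˣ) (p p' : ℤ) (hp : p + n < p') :
    ribOp n q p' * ribOp n q p = ribOp n q p * ribOp n q p' := by
  refine end_ext fun f => ?_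
  rw [Module.End.mul_apply, Module.End.mul_apply]
  have e1 := addable_bump_iff (p := p') (p' := p) (n := n) f (by omega)
  have e2 := addable_bump_iff (p := p) (p' := p') (n := n) f (by omega)
  by_cases h : Addable n p f <;> by_cases h' : Addable n p' f
  · rw [ribOp_single_pos q h, map_smul, ribOp_single_pos q (e1.2 h'), ribOp_single_pos q h',
      map_smul, ribOp_single_pos q (e2.2 h), bump_comm, smul_smul, smul_smul]
    rw [bump_of_notMem (by omega), bump_of_notMem (by omega), bump_of_notMem (by omega),
      bump_of_notMem (by omega)]
    simp [mul_comm]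
  · rw [ribOp_single_pos q h, map_smul, ribOp_single_neg q (fun k => h' (e1.1 k)),
      ribOp_single_neg q h']
    simp
  · rw [ribOp_single_pos q h', map_smul, ribOp_single_neg q (fun k => h (e2.1 k)),
      ribOp_single_neg q h]
    simp
  · rw [ribOp_single_neg q h', ribOp_single_neg q h, map_zero, map_zero]

/-- Of two overlapping ribbons the second one added sits on the first one, so that its spin
depends on the order: if the left one is added last its spin drops by one, and if the right one
is added last its spin grows by one. -/
lemma ribOp_qcomm (n : ℕ) (q : Rˣ) (p p' : ℤ) (hp : p < p') (hp' : p' < p + n) :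
    ribOp n q p' * ribOp n q p = ((q ^ 2 : Rˣ) : R) • (ribOp n q p * ribOp n q p') := by
  refine end_ext fun f => ?_
  rw [LinearMap.smul_apply, Module.End.mul_apply, Module.End.mul_apply]
  have e1 := addable_bump_iff (p := p') (p' := p) (n := n) f (by omega)
  have e2 := addable_bump_iff (p := p) (p' := p') (n := n) f (by omega)
  by_cases h : Addable n p f <;> by_cases h' : Addable n p' f
  · rw [ribOp_single_pos q h, map_smul, ribOp_single_pos q (e1.2 h'), ribOp_single_pos q h',
      map_smul, ribOp_single_pos q (e2.2 h), bump_comm, smul_smul, smul_smul, smul_smul]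
    rw [bump_of_mem (by omega), bump_of_notMem (by omega), bump_of_notMem (by omega),
      bump_of_mem (by omega)]
    congr 1
    rw [one_mul, one_mul, one_mul, one_mul, ← Units.val_mul, ← Units.val_mul, ← Units.val_mul]
    congr 1
    rw [← zpow_natCast, ← zpow_add, ← zpow_add, ← zpow_add]
    congr 1
    push_cast
    ring
  · rw [ribOp_single_pos q h, map_smul, ribOp_single_neg q (fun k => h' (e1.1 k)),
      ribOp_single_neg q h']
    simp
  · rw [ribOp_single_pos q h', map_smul, ribOp_single_neg q (fun k => h (e2.1 k)),
      ribOp_single_neg q h]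
    simp
  · rw [ribOp_single_neg q h', ribOp_single_neg q h]; simp

lemma ribOp_relations (n : ℕ) (hn : 1 ≤ n) (q : Rˣ) (N : ℤ) :
    RibbonRelations n ((q ^ 2 : Rˣ) : R) (fun i : ℕ => ribOp n q ((i : ℤ) - N)) where
  sq i := ribOp_sq n hn q _
  qcomm i j h h' := ribOp_qcomm n q _ _ (by omega) (by omega)
  comm i j h := ribOp_comm n q _ _ (by omega)
  low i := by
    have := ribOp_low n hn q ((i : ℤ) - N)
    rwa [show (i : ℤ) - N + n = ((i + n : ℕ) : ℤ) - N by push_cast; ring] at this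
  high i := by
    have := ribOp_high n hn q ((i : ℤ) - N)
    rwa [show (i : ℤ) - N + n = ((i + n : ℕ) : ℤ) - N by push_cast; ring] at this

open scoped Classical in
/-- Matrix coefficients of a ribbon operator, read off at the target. -/
lemma ribOp_apply (n : ℕ) (q : Rˣ) (p : ℤ) (v : (ℤ → ℤ) →₀ R) (g : ℤ → ℤ) :
    (∀ f, bump n p f = g → Addable n p f →
      ribOp n q p v g = ((q ^ (f p - f (p + n - 1)) : Rˣ) : R) * v f) ∧
    ((∀ f, bump n p f = g → ¬Addable n p f) → ribOp n q p v g = 0) := by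
  have hinj : ∀ f f', bump n p f = bump n p f' → f = f' := by
    intro f f' h
    funext c
    have := congrFun h c
    simp only [bump] at this
    split_ifs at this <;> omega
  induction v using Finsupp.induction_linear with
  | zero => simp
  | add v w hv hw =>
    refine ⟨fun f h1 h2 => ?_, fun h => ?_⟩
    · rw [map_add, Finsupp.add_apply, hv.1 f h1 h2, hw.1 f h1 h2, Finsupp.add_apply, mul_add]
    · rw [map_add, Finsupp.add_apply, hv.2 h, hw.2 h, add_zero]
  | single f' r =>
    refine ⟨fun f h1 h2 => ?_, fun h => ?_⟩
    · by_cases hf : f' = f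
      · subst hf
        rw [ribOp_single_pos q h2, ← h1]
        simp [mul_comm]
      · rw [Finsupp.single_eq_of_ne (Ne.symm hf), mul_zero]
        by_cases h3 : Addable n p f'
        · rw [ribOp_single_pos q h3, Finsupp.smul_apply, Finsupp.single_eq_of_ne, smul_zero]
          rintro rfl
          exact hf (hinj _ _ h1.symm)
        · rw [ribOp_single_neg q h3]; rfl
    · by_cases h3 : Addable n p f'
      · rw [ribOp_single_pos q h3, Finsupp.smul_apply, Finsupp.single_eq_of_ne, smul_zero]
        rintro rfl
        exact h _ rfl h3
      · rw [ribOp_single_neg q h3]; rfl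

end Operators
end SuperLLT

/-! ### Boundary functions of Young diagrams -/

namespace SuperLLT

section Boundary

lemma exists_rho (μ : YoungDiagram) (c : ℤ) :
    ∃ i : ℕ, 0 ≤ (i : ℤ) + c ∧ (i, ((i : ℤ) + c).toNat) ∉ μ := by
  refine ⟨max (μ.colLen 0) (-c).toNat, by omega, fun h => ?_⟩
  have h0 : (max (μ.colLen 0) (-c).toNat, 0) ∈ μ :=
    μ.up_left_mem le_rfl (Nat.zero_le _) h
  rw [YoungDiagram.mem_iff_lt_colLen] at h0
  omega

open scoped Classical in
/-- The boundary function of a Young diagram: `rho μ c` is the row of the first position of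
the diagonal of content `c` that lies outside `μ`. -/
noncomputable def rho (μ : YoungDiagram) (c : ℤ) : ℤ :=
  (Nat.find (exists_rho μ c) : ℤ)

lemma mem_iff_lt_rho (μ : YoungDiagram) (i j : ℕ) :
    (i, j) ∈ μ ↔ (i : ℤ) < rho μ ((j : ℤ) - i) := by
  classical
  have hs := Nat.find_spec (exists_rho μ ((j : ℤ) - i))
  set k := Nat.find (exists_rho μ ((j : ℤ) - i)) with hk
  have hr : rho μ ((j : ℤ) - i) = k := by rw [hk, rho]
  rw [hr]
  constructor
  · intro h
    by_contra hlt
    exact hs.2 (μ.up_left_mem (by omega) (by omega) h)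
  · intro h
    by_contra hn
    have : k ≤ i := by
      rw [hk]
      refine Nat.find_le ⟨by omega, ?_⟩
      rwa [show ((i : ℤ) + ((j : ℤ) - i)).toNat = j by omega]
    omega

lemma rho_nonneg (μ : YoungDiagram) (c : ℤ) : 0 ≤ rho μ c := by
  simp [rho]

lemma rho_add_nonneg (μ : YoungDiagram) (c : ℤ) : 0 ≤ rho μ c + c := by
  classical
  exact (Nat.find_spec (exists_rho μ c)).1

lemma exists_cell {r c : ℤ} (h : 0 ≤ r) (h' : 0 ≤ r + c) :
    ∃ i j : ℕ, (i : ℤ) = r ∧ (j : ℤ) - i = c ∧ (j : ℤ) = r + c :=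
  ⟨r.toNat, (r + c).toNat, by omega, by omega, by omega⟩

/-- `rho` decreases by `0` or `1` at each step to the right. -/
lemma rho_step (μ : YoungDiagram) (c : ℤ) :
    rho μ c ≤ rho μ (c - 1) ∧ rho μ (c - 1) ≤ rho μ c + 1 := by
  constructor
  · obtain ⟨i, j, hi, hc, hj⟩ := exists_cell (rho_nonneg μ (c - 1)) (rho_add_nonneg μ (c - 1))
    have h1 : (i, j) ∉ μ := by rw [mem_iff_lt_rho, hc]; omega
    have h2 : (i, j + 1) ∉ μ := fun h => h1 (μ.up_left_mem le_rfl (by omega) h)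
    rw [mem_iff_lt_rho, show ((j + 1 : ℕ) : ℤ) - i = c by push_cast; omega] at h2
    omega
  · obtain ⟨i, j, hi, hc, hj⟩ := exists_cell (rho_nonneg μ c) (rho_add_nonneg μ c)
    have h1 : (i, j) ∉ μ := by rw [mem_iff_lt_rho, hc]; omega
    have h2 : (i + 1, j) ∉ μ := fun h => h1 (μ.up_left_mem (by omega) le_rfl h)
    rw [mem_iff_lt_rho, show (j : ℤ) - ((i + 1 : ℕ) : ℤ) = c - 1 by push_cast; omega] at h2
    push_cast at h2
    omega

lemma rho_eq_of_mem_iff (μ : YoungDiagram) (g : ℤ → ℤ) (h0 : ∀ c, 0 ≤ g c)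
    (h1 : ∀ c, 0 ≤ g c + c) (h : ∀ i j : ℕ, (i, j) ∈ μ ↔ (i : ℤ) < g ((j : ℤ) - i)) :
    rho μ = g := by
  funext c
  obtain ⟨i, j, hi, hc, hj⟩ := exists_cell (rho_nonneg μ c) (rho_add_nonneg μ c)
  obtain ⟨i', j', hi', hc', hj'⟩ := exists_cell (h0 c) (h1 c)
  have a := (h i j).symm.trans (mem_iff_lt_rho μ i j)
  have b := (h i' j').symm.trans (mem_iff_lt_rho μ i' j')
  rw [hc] at a
  rw [hc'] at b
  omega

lemma rho_injective {μ ν : YoungDiagram} (h : rho μ = rho ν) : μ = ν := by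
  refine YoungDiagram.ext (Finset.ext fun ⟨i, j⟩ => ?_)
  rw [YoungDiagram.mem_cells, YoungDiagram.mem_cells, mem_iff_lt_rho, mem_iff_lt_rho, h]

lemma isLowerSet_of_step {s : Set (ℕ × ℕ)} (h1 : ∀ i j, (i + 1, j) ∈ s → (i, j) ∈ s)
    (h2 : ∀ i j, (i, j + 1) ∈ s → (i, j) ∈ s) : IsLowerSet s := by
  have a : ∀ k i j, (i + k, j) ∈ s → (i, j) ∈ s := by
    intro k
    induction k with
    | zero => intro i j h; exact h
    | succ k ih => intro i j h; exact ih i j (h1 _ _ h)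
  have b : ∀ k i j, (i, j + k) ∈ s → (i, j) ∈ s := by
    intro k
    induction k with
    | zero => intro i j h; exact h
    | succ k ih => intro i j h; exact ih i j (h2 _ _ h)
  rintro ⟨i, j⟩ ⟨i', j'⟩ hle h
  obtain ⟨k, rfl⟩ := Nat.exists_eq_add_of_le hle.1
  obtain ⟨l, hl⟩ := Nat.exists_eq_add_of_le hle.2
  simp only at hl
  subst hl
  exact a k _ _ (b l _ _ h)

/-- Removing a ribbon: the boundary function of `lam` lowered by one on `[p, p + n)` is a
boundary function as soon as the ribbon is addable to it. -/
lemma exists_remove (n : ℕ) (p : ℤ) (lam : YoungDiagram) (f : ℤ → ℤ)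
    (hf : bump n p f = rho lam) (h : Addable n p f) : ∃ ν : YoungDiagram, rho ν = f := by
  have hb : ∀ c, rho lam c = if p ≤ c ∧ c < p + n then f c + 1 else f c := fun c => by
    rw [← hf]; rfl
  have step : ∀ c, f c ≤ f (c - 1) ∧ f (c - 1) ≤ f c + 1 := by
    intro c
    have h0 := rho_step lam c
    rw [hb, hb] at h0
    obtain ⟨h1, h2⟩ := h
    by_cases hc : c = p
    · subst hc; omega
    by_cases hc' : c = p + n
    · subst hc'; omega
    split_ifs at h0 <;> omega
  have pos : ∀ c, 0 ≤ f c := by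
    have : ∀ k : ℕ, 0 ≤ f (p + n - k) := by
      intro k
      induction k with
      | zero =>
        have := rho_nonneg lam (p + n)
        rw [hb, if_neg (by omega)] at this
        simpa using this
      | succ k ih =>
        have := (step (p + n - k)).1
        rw [show p + n - ((k + 1 : ℕ) : ℤ) = p + n - k - 1 by push_cast; ring]
        omega
    intro c
    by_cases hc : c < p + n
    · have := this (p + n - c).toNat
      rwa [show p + n - ((p + n - c).toNat : ℤ) = c by omega] at this
    · have := rho_nonneg lam c
      rwa [hb, if_neg (by omega)] at this
  have pos' : ∀ c, 0 ≤ f c + c := by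
    have : ∀ k : ℕ, 0 ≤ f (p - 1 + k) + (p - 1 + k) := by
      intro k
      induction k with
      | zero =>
        have := rho_add_nonneg lam (p - 1)
        rw [hb, if_neg (by omega)] at this
        simpa using this
      | succ k ih =>
        have := (step (p - 1 + ((k + 1 : ℕ) : ℤ))).2
        rw [show p - 1 + ((k + 1 : ℕ) : ℤ) - 1 = p - 1 + k by push_cast; ring] at this
        push_cast at this ⊢
        omega
    intro c
    by_cases hc : p - 1 < c
    · have := this (c - (p - 1)).toNat
      rwa [show p - 1 + ((c - (p - 1)).toNat : ℤ) = c by omega] at this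
    · have := rho_add_nonneg lam c
      rwa [hb, if_neg (by omega)] at this
  refine ⟨⟨lam.cells.filter fun c => (c.1 : ℤ) < f ((c.2 : ℤ) - c.1), ?_⟩, ?_⟩
  · refine isLowerSet_of_step (fun i j hij => ?_) (fun i j hij => ?_)
    · simp only [Finset.coe_filter, Set.mem_ofPred_eq, YoungDiagram.mem_cells] at hij ⊢
      refine ⟨lam.up_left_mem (by omega) le_rfl hij.1, ?_⟩
      have := (step ((j : ℤ) - i)).2
      have h2 := hij.2
      rw [show (j : ℤ) - ((i + 1 : ℕ) : ℤ) = (j : ℤ) - i - 1 by push_cast; ring] at h2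
      push_cast at h2
      omega
    · simp only [Finset.coe_filter, Set.mem_ofPred_eq, YoungDiagram.mem_cells] at hij ⊢
      refine ⟨lam.up_left_mem le_rfl (by omega) hij.1, ?_⟩
      have := (step (((j + 1 : ℕ) : ℤ) - i)).1
      have h2 := hij.2
      rw [show ((j + 1 : ℕ) : ℤ) - i - 1 = (j : ℤ) - i by push_cast; ring] at this
      omega
  · refine rho_eq_of_mem_iff _ f pos pos' fun i j => ?_
    rw [← YoungDiagram.mem_cells]
    simp only [Finset.mem_filter, YoungDiagram.mem_cells, and_iff_right_iff_imp]
    intro hlt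
    rw [mem_iff_lt_rho, hb]
    split_ifs <;> omega

end Boundary
end SuperLLT

/-! ### Ribbons -/

namespace SuperLLT

section Ribbons

/-- `t` consists of exactly one cell on each of the diagonals `p, …, p + n - 1`, namely the
one in row `g c` on the diagonal of content `c`, and consecutive cells are adjacent. -/
structure IsRib (n : ℕ) (p : ℤ) (g : ℤ → ℤ) (t : Finset (ℕ × ℕ)) : Prop where
  step : ∀ c, p < c → c < p + n → g c ≤ g (c - 1) ∧ g (c - 1) ≤ g c + 1
  nonneg : ∀ c, p ≤ c → c < p + n → 0 ≤ g c ∧ 0 ≤ g c + c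
  mem : ∀ i j : ℕ, (i, j) ∈ t ↔
    p ≤ (j : ℤ) - i ∧ (j : ℤ) - i < p + n ∧ (i : ℤ) = g ((j : ℤ) - i)

/-- The content of a cell. -/
def content (c : ℕ × ℕ) : ℤ := (c.2 : ℤ) - c.1

/-- The content of the bottom-left cell of a ribbon. -/
def tailContent (t : Finset (ℕ × ℕ)) : ℤ := content (bottomLeft t)

lemma mem_skew_iff (μ lam : YoungDiagram) (i j : ℕ) :
    (i, j) ∈ lam.cells \ μ.cells ↔
      rho μ ((j : ℤ) - i) ≤ i ∧ (i : ℤ) < rho lam ((j : ℤ) - i) := by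
  rw [Finset.mem_sdiff, YoungDiagram.mem_cells, YoungDiagram.mem_cells, mem_iff_lt_rho,
    mem_iff_lt_rho]
  omega

lemma exists_content_between {t : Finset (ℕ × ℕ)} {a b : ℕ × ℕ} (ha : a ∈ t)
    (h : Relation.ReflTransGen (fun a b => a ∈ t ∧ b ∈ t ∧ Adj a b) a b) (k : ℤ)
    (h1 : content a ≤ k) (h2 : k ≤ content b) : ∃ c ∈ t, content c = k := by
  induction h with
  | refl => exact ⟨a, ha, le_antisymm h1 h2⟩
  | @tail b b' _ hb ih =>
    by_cases hk : k ≤ content b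
    · exact ih hk
    · refine ⟨b', hb.2.1, ?_⟩
      have := hb.2.2
      simp only [Adj, content] at *
      omega

/-- A ribbon has exactly one cell on each of `n` consecutive diagonals: two cells on a diagonal
would span a square, and connectedness leaves no gaps. -/
lemma exists_isRib {n : ℕ} (hn : 1 ≤ n) {t : Finset (ℕ × ℕ)} (h : IsRibbon n t) :
    ∃ p g, IsRib n p g t := by
  obtain ⟨hcard, ⟨μ, lam, hle, rfl⟩, hconn, hsq⟩ := h
  set t := lam.cells \ μ.cells with ht
  have hmem := mem_skew_iff μ lam
  rw [← ht] at hmem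
  have hone : ∀ c, rho lam c ≤ rho μ c + 1 := by
    intro c
    by_contra hc
    obtain ⟨i, j, hi, hic, hj⟩ := exists_cell (rho_nonneg μ c) (rho_add_nonneg μ c)
    have s1 := rho_step μ (c + 1)
    have s2 := rho_step lam (c + 1)
    have s3 := rho_step μ c
    have s4 := rho_step lam c
    rw [add_sub_cancel_right] at s1 s2
    refine hsq i j ⟨(hmem _ _).2 ?_, (hmem _ _).2 ?_, (hmem _ _).2 ?_, (hmem _ _).2 ?_⟩
    · rw [hic]; omega
    · rw [show (j : ℤ) - ((i + 1 : ℕ) : ℤ) = c - 1 by push_cast; omega]; push_cast; omega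
    · rw [show ((j + 1 : ℕ) : ℤ) - (i : ℤ) = c + 1 by push_cast; omega]; omega
    · rw [show ((j + 1 : ℕ) : ℤ) - ((i + 1 : ℕ) : ℤ) = c by push_cast; omega]; push_cast; omega
  have hinj : Set.InjOn content (t : Set (ℕ × ℕ)) := by
    rintro ⟨i, j⟩ h1 ⟨i', j'⟩ h2 h3
    simp only [content] at h3
    have a := (hmem _ _).1 h1
    have b := (hmem _ _).1 h2
    rw [← h3] at b
    have := hone ((j : ℤ) - i)
    ext <;> simp only <;> omega
  have hne : (t.image content).Nonempty := by
    rw [Finset.image_nonempty, ← Finset.card_pos]; omega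
  set p := (t.image content).min' hne with hp
  set m := (t.image content).max' hne with hm
  have hI : t.image content = Finset.Icc p m := by
    ext k
    rw [Finset.mem_Icc]
    constructor
    · intro hk
      exact ⟨Finset.min'_le _ _ hk, Finset.le_max' _ _ hk⟩
    · rintro ⟨h1, h2⟩
      obtain ⟨a, ha, ha'⟩ := Finset.mem_image.1 ((t.image content).min'_mem hne)
      obtain ⟨b, hb, hb'⟩ := Finset.mem_image.1 ((t.image content).max'_mem hne)
      obtain ⟨c, hc, hc'⟩ := exists_content_between ha (hconn a ha b hb) k (by omega) (by omega)
      exact Finset.mem_image.2 ⟨c, hc, hc'⟩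
  have hmn : m = p + n - 1 := by
    have h1 := Finset.card_image_of_injOn hinj
    rw [hI, Int.card_Icc, hcard] at h1
    omega
  have hmem' : ∀ c, (rho μ c < rho lam c) ↔ p ≤ c ∧ c < p + n := by
    intro c
    have : c ∈ t.image content ↔ p ≤ c ∧ c < p + n := by
      rw [hI, Finset.mem_Icc]; omega
    rw [← this, Finset.mem_image]
    constructor
    · intro h
      obtain ⟨i, j, hi, hic, hj⟩ := exists_cell (rho_nonneg μ c) (rho_add_nonneg μ c)
      exact ⟨(i, j), (hmem _ _).2 (by rw [hic]; omega), hic⟩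
    · rintro ⟨⟨i, j⟩, h1, rfl⟩
      have := (hmem _ _).1 h1
      simp only [content]
      omega
  refine ⟨p, rho μ, fun c _ _ => rho_step μ c,
    fun c _ _ => ⟨rho_nonneg μ c, rho_add_nonneg μ c⟩, fun i j => ?_⟩
  rw [hmem, ← and_assoc, ← hmem']
  have := hone ((j : ℤ) - i)
  omega

namespace IsRib

variable {n : ℕ} {p : ℤ} {g : ℤ → ℤ} {t : Finset (ℕ × ℕ)}

lemma mono (h : IsRib n p g t) {c c' : ℤ} (h1 : p ≤ c) (h2 : c ≤ c') (h3 : c' < p + n) :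
    g c' ≤ g c ∧ g c + c ≤ g c' + c' := by
  obtain ⟨k, rfl⟩ : ∃ k : ℕ, c' = c + k := ⟨(c' - c).toNat, by omega⟩
  induction k with
  | zero => simp
  | succ k ih =>
    have := ih (by omega) (by omega)
    have h4 := h.step (c + ((k + 1 : ℕ) : ℤ)) (by push_cast; omega) h3
    rw [show c + ((k + 1 : ℕ) : ℤ) - 1 = c + k by push_cast; ring] at h4
    push_cast at h4 ⊢
    omega

lemma exists_mem (h : IsRib n p g t) {c : ℤ} (h1 : p ≤ c) (h2 : c < p + n) :
    ∃ i j : ℕ, (i, j) ∈ t ∧ (i : ℤ) = g c ∧ (j : ℤ) - i = c := by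
  obtain ⟨i, j, hi, hc, hj⟩ := exists_cell (h.nonneg c h1 h2).1 (h.nonneg c h1 h2).2
  exact ⟨i, j, (h.mem i j).2 (by rw [hc]; exact ⟨h1, h2, hi⟩), hi, hc⟩

lemma card_eq (h : IsRib n p g t) : t.card = n := by
  have hinj : Set.InjOn content (t : Set (ℕ × ℕ)) := by
    rintro ⟨i, j⟩ h1 ⟨i', j'⟩ h2 h3
    simp only [content] at h3
    have a := (h.mem _ _).1 h1
    have b := (h.mem _ _).1 h2
    rw [← h3] at b
    ext <;> simp only <;> omega
  have hI : t.image content = Finset.Ico p (p + n) := by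
    ext k
    rw [Finset.mem_Ico, Finset.mem_image]
    constructor
    · rintro ⟨⟨i, j⟩, h1, rfl⟩
      have a := (h.mem _ _).1 h1
      exact ⟨a.1, a.2.1⟩
    · rintro ⟨h1, h2⟩
      obtain ⟨i, j, hij, -, hc⟩ := h.exists_mem h1 h2
      exact ⟨(i, j), hij, hc⟩
  rw [← Finset.card_image_of_injOn hinj, hI, Int.card_Ico]
  omega

lemma connected (h : IsRib n p g t) : ConnectedCells t := by
  intro a ha b hb
  set r := fun a b => a ∈ t ∧ b ∈ t ∧ Adj a b with hr
  have key : ∀ k : ℕ, ∀ a ∈ t, content a = p + k → ∀ b ∈ t, content b = p →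
      Relation.ReflTransGen r a b ∧ Relation.ReflTransGen r b a := by
    intro k
    induction k with
    | zero =>
      rintro ⟨i, j⟩ ha hac ⟨i', j'⟩ hb hbc
      have a' := (h.mem _ _).1 ha
      have b' := (h.mem _ _).1 hb
      simp only [content] at hac hbc
      rw [hac] at a'
      rw [hbc] at b'
      simp only [Nat.cast_zero, add_zero] at a' hac
      have hi : i = i' := by omega
      have hj : j = j' := by omega
      subst hi hj
      exact ⟨.refl, .refl⟩
    | succ k ih =>
      rintro ⟨i, j⟩ ha hac b hb hbc
      have a' := (h.mem _ _).1 ha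
      simp only [content] at hac
      rw [hac] at a'
      push_cast at a'
      obtain ⟨i', j', hm, hi', hc'⟩ := h.exists_mem (c := p + k) (by omega) (by omega)
      have hs := h.step (p + (k + 1)) (by omega) (by omega)
      rw [show p + ((k : ℤ) + 1) - 1 = p + k by ring] at hs
      obtain ⟨r1, r2⟩ := ih (i', j') hm hc' b hb hbc
      have hadj : Adj (i, j) (i', j') ∧ Adj (i', j') (i, j) := by
        simp only [Adj]
        push_cast at hac
        omega
      exact ⟨Relation.ReflTransGen.head ⟨ha, hm, hadj.1⟩ r1, r2.tail ⟨hm, ha, hadj.2⟩⟩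
  obtain ⟨i, j⟩ := a
  obtain ⟨i', j'⟩ := b
  have a' := (h.mem _ _).1 ha
  have b' := (h.mem _ _).1 hb
  obtain ⟨i0, j0, hm, -, hc⟩ := h.exists_mem (c := p) le_rfl (by omega)
  exact (key ((j : ℤ) - i - p).toNat (i, j) ha (by simp only [content]; omega) _ hm hc).1.trans
    (key ((j' : ℤ) - i' - p).toNat (i', j') hb (by simp only [content]; omega) _ hm hc).2

lemma noTwoByTwo (h : IsRib n p g t) : NoTwoByTwo t := by
  rintro i j ⟨h1, -, -, h2⟩
  have a := (h.mem _ _).1 h1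
  have b := (h.mem _ _).1 h2
  rw [show ((j + 1 : ℕ) : ℤ) - ((i + 1 : ℕ) : ℤ) = (j : ℤ) - i by push_cast; ring] at b
  push_cast at b
  omega

end IsRib

lemma bottomLeft_eq {s : Finset (ℕ × ℕ)} {b : ℕ × ℕ} (hb : b ∈ s) (h1 : ∀ x ∈ s, x.1 ≤ b.1)
    (h2 : ∀ x ∈ s, x.1 = b.1 → b.2 ≤ x.2) : bottomLeft s = b := by
  have e1 : (s.image Prod.fst).max = (b.1 : WithBot ℕ) := by
    refine le_antisymm (Finset.max_le fun x hx => ?_)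
      (Finset.le_max (Finset.mem_image_of_mem _ hb))
    obtain ⟨y, hy, rfl⟩ := Finset.mem_image.1 hx
    exact WithBot.coe_le_coe.2 (h1 y hy)
  have e1' : (s.image Prod.fst).max.getD 0 = b.1 := by rw [e1]; rfl
  have e2 : ((s.filter fun c => c.1 = b.1).image Prod.snd).min = (b.2 : WithTop ℕ) := by
    refine le_antisymm
      (Finset.min_le (Finset.mem_image_of_mem _ (Finset.mem_filter.2 ⟨hb, rfl⟩)))
      (Finset.le_min fun x hx => ?_)
    obtain ⟨y, hy, rfl⟩ := Finset.mem_image.1 hx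
    rw [Finset.mem_filter] at hy
    exact WithTop.coe_le_coe.2 (h2 y hy.1 hy.2)
  rw [bottomLeft, e1', e2]
  rfl

lemma topRight_eq {s : Finset (ℕ × ℕ)} {b : ℕ × ℕ} (hb : b ∈ s) (h1 : ∀ x ∈ s, b.1 ≤ x.1)
    (h2 : ∀ x ∈ s, x.1 = b.1 → x.2 ≤ b.2) : topRight s = b := by
  have e1 : (s.image Prod.fst).min = (b.1 : WithTop ℕ) := by
    refine le_antisymm (Finset.min_le (Finset.mem_image_of_mem _ hb))
      (Finset.le_min fun x hx => ?_)
    obtain ⟨y, hy, rfl⟩ := Finset.mem_image.1 hx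
    exact WithTop.coe_le_coe.2 (h1 y hy)
  have e1' : (s.image Prod.fst).min.getD 0 = b.1 := by rw [e1]; rfl
  have e2 : ((s.filter fun c => c.1 = b.1).image Prod.snd).max = (b.2 : WithBot ℕ) := by
    refine le_antisymm (Finset.max_le fun x hx => ?_)
      (Finset.le_max (Finset.mem_image_of_mem _ (Finset.mem_filter.2 ⟨hb, rfl⟩)))
    obtain ⟨y, hy, rfl⟩ := Finset.mem_image.1 hx
    rw [Finset.mem_filter] at hy
    exact WithBot.coe_le_coe.2 (h2 y hy.1 hy.2)
  rw [topRight, e1', e2]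
  rfl

namespace IsRib

variable {n : ℕ} {p : ℤ} {g : ℤ → ℤ} {t : Finset (ℕ × ℕ)}

/-- The bottom-left cell is the one of smallest content. -/
lemma bottomLeft_spec (hn : 1 ≤ n) (h : IsRib n p g t) :
    bottomLeft t ∈ t ∧ ((bottomLeft t).1 : ℤ) = g p ∧ content (bottomLeft t) = p := by
  obtain ⟨i, j, hm, hi, hc⟩ := h.exists_mem (c := p) le_rfl (by omega)
  have : bottomLeft t = (i, j) := by
    refine bottomLeft_eq hm ?_ ?_
    · rintro ⟨i', j'⟩ h'
      have a := (h.mem _ _).1 h'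
      have := h.mono le_rfl a.1 a.2.1
      simp only
      omega
    · rintro ⟨i', j'⟩ h' he
      have a := (h.mem _ _).1 h'
      simp only at he ⊢
      omega
  rw [this]
  exact ⟨hm, hi, hc⟩

/-- The top-right cell is the one of largest content. -/
lemma topRight_spec (hn : 1 ≤ n) (h : IsRib n p g t) :
    topRight t ∈ t ∧ ((topRight t).1 : ℤ) = g (p + n - 1) ∧
      content (topRight t) = p + n - 1 := by
  obtain ⟨i, j, hm, hi, hc⟩ := h.exists_mem (c := p + n - 1) (by omega) (by omega)
  have : topRight t = (i, j) := by
    refine topRight_eq hm ?_ ?_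
    · rintro ⟨i', j'⟩ h'
      have a := (h.mem _ _).1 h'
      have := h.mono (c' := p + n - 1) a.1 (by omega) (by omega)
      simp only
      omega
    · rintro ⟨i', j'⟩ h' he
      have a := (h.mem _ _).1 h'
      simp only at he ⊢
      omega
  rw [this]
  exact ⟨hm, hi, hc⟩

lemma tailContent_eq (hn : 1 ≤ n) (h : IsRib n p g t) : tailContent t = p :=
  (h.bottomLeft_spec hn).2.2

lemma exists_row (h : IsRib n p g t) (k : ℕ) (hk : p + k < p + n) (r : ℤ)
    (h1 : g (p + k) ≤ r) (h2 : r ≤ g p) : ∃ c, p ≤ c ∧ c < p + n ∧ g c = r := by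
  induction k with
  | zero => exact ⟨p, by omega, by omega, by simp at h1; omega⟩
  | succ k ih =>
    by_cases hr : g (p + k) ≤ r
    · exact ih (by omega) hr
    · have hs := h.step (p + ((k + 1 : ℕ) : ℤ)) (by omega) hk
      rw [show p + ((k + 1 : ℕ) : ℤ) - 1 = p + k by push_cast; ring] at hs
      exact ⟨p + ((k + 1 : ℕ) : ℤ), by omega, hk, by omega⟩

lemma spin_eq (hn : 1 ≤ n) (h : IsRib n p g t) : (spin t : ℤ) = g p - g (p + n - 1) := by
  have hn0 := (h.nonneg (p + n - 1) (by omega) (by omega)).1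
  have hm := (h.mono (c := p) (c' := p + n - 1) le_rfl (by omega) (by omega)).1
  have : t.image Prod.fst = Finset.Icc (g (p + n - 1)).toNat (g p).toNat := by
    ext r
    rw [Finset.mem_image, Finset.mem_Icc]
    constructor
    · rintro ⟨⟨i, j⟩, hij, rfl⟩
      have a := (h.mem _ _).1 hij
      have h1 := h.mono le_rfl a.1 a.2.1
      have h2 := h.mono (c' := p + n - 1) a.1 (by omega) (by omega)
      simp only
      omega
    · rintro ⟨h1, h2⟩
      obtain ⟨c, hc1, hc2, hc3⟩ := h.exists_row (n - 1) (by omega) r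
        (by rw [show p + ((n - 1 : ℕ) : ℤ) = p + n - 1 by omega]; omega) (by omega)
      obtain ⟨i, j, hij, hi, -⟩ := h.exists_mem hc1 hc2
      exact ⟨(i, j), hij, by simp only; omega⟩
  rw [spin, this, Nat.card_Icc]
  omega

end IsRib

/-- Adding a ribbon with tail content `p` raises the boundary function by one on
`[p, p + n)`. -/
lemma rho_of_ribbon {n : ℕ} (hn : 1 ≤ n) {ν lam : YoungDiagram} (hle : ν ≤ lam)
    (h : IsRibbon n (lam.cells \ ν.cells)) :
    rho lam = bump n (tailContent (lam.cells \ ν.cells)) (rho ν) := by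
  obtain ⟨p, g, hr⟩ := exists_isRib hn h
  rw [hr.tailContent_eq hn]
  funext c
  have hmem : ∀ i j : ℕ, _ := fun i j => (mem_skew_iff ν lam i j).symm.trans (hr.mem i j)
  have hle' : rho ν c ≤ rho lam c := by
    obtain ⟨i, j, hi, hc, hj⟩ := exists_cell (rho_nonneg lam c) (rho_add_nonneg lam c)
    by_contra hlt
    have h1 : (i, j) ∈ ν := by rw [mem_iff_lt_rho, hc]; omega
    have h2 := hle h1
    rw [mem_iff_lt_rho, hc] at h2
    omega
  obtain ⟨i, j, hi, hc, hj⟩ := exists_cell (rho_nonneg ν c) (rho_add_nonneg ν c)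
  have h1 := hmem i j
  have h2 := hmem (i + 1) (j + 1)
  rw [show ((j + 1 : ℕ) : ℤ) - ((i + 1 : ℕ) : ℤ) = (j : ℤ) - i by push_cast; ring] at h2
  rw [hc] at h1 h2
  push_cast at h2
  by_cases hcp : p ≤ c ∧ c < p + n
  · rw [bump_of_mem hcp]
    obtain ⟨i', j', hm', hi', hc'⟩ := hr.exists_mem hcp.1 hcp.2
    have h3 := (hmem i' j').2 ((hr.mem i' j').1 hm')
    rw [hc'] at h3
    omega
  · rw [bump_of_notMem hcp]
    omega

lemma isRib_of_rho {n : ℕ} {ν lam : YoungDiagram} {p : ℤ} (h : rho lam = bump n p (rho ν)) :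
    ν ≤ lam ∧ IsRib n p (rho ν) (lam.cells \ ν.cells) := by
  constructor
  · rintro ⟨i, j⟩ hij
    have := (mem_iff_lt_rho ν i j).1 hij
    refine (mem_iff_lt_rho lam i j).2 ?_
    rw [h, bump]
    split_ifs <;> omega
  · refine ⟨fun c _ _ => rho_step ν c, fun c _ _ => ⟨rho_nonneg ν c, rho_add_nonneg ν c⟩,
      fun i j => ?_⟩
    rw [mem_skew_iff, h, bump]
    split_ifs <;> omega

lemma isRibbon_of_rho {n : ℕ} {ν lam : YoungDiagram} {p : ℤ}
    (h : rho lam = bump n p (rho ν)) : IsRibbon n (lam.cells \ ν.cells) := by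
  obtain ⟨hle, hr⟩ := isRib_of_rho h
  exact ⟨hr.card_eq, ⟨ν, lam, hle, rfl⟩, hr.connected, hr.noTwoByTwo⟩

lemma addable_of_rho {n : ℕ} (hn : 1 ≤ n) {ν lam : YoungDiagram} {p : ℤ}
    (h : rho lam = bump n p (rho ν)) : Addable n p (rho ν) := by
  have h1 := rho_step lam p
  have h2 := rho_step ν p
  have h3 := rho_step lam (p + n)
  have h4 := rho_step ν (p + n)
  rw [h, bump_of_mem (by omega), bump_of_notMem (by omega)] at h1
  rw [h, bump_of_notMem (by omega), bump_of_mem (by omega)] at h3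
  exact ⟨by omega, by omega⟩

end Ribbons
end SuperLLT

/-! ### Standardized tableaux and products of ribbon operators -/

namespace SuperLLT

section Flat

variable {L : Type*}

/-- The refined letter of a labelled ribbon: its label together with its tail content. -/
def flat (p : Finset (ℕ × ℕ) × L) : L × ℤ := (p.2, tailContent p.1)

/-- `T` is a standardized tableau of shape `lam / μ` with refined letters in `K`: refined
letters are used at most once, and they increase (for the relation `lt`) from a cell to the
cells directly below and directly to its right. -/
structure IsFlat (n : ℕ) (lt : L × ℤ → L × ℤ → Prop) (μ lam : YoungDiagram)
    (K : List (L × ℤ)) (T : Finset (Finset (ℕ × ℕ) × L)) : Prop where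
  ribbon : ∀ p ∈ T, IsRibbon n p.1
  disj : ∀ p ∈ T, ∀ p' ∈ T, p ≠ p' → Disjoint p.1 p'.1
  le : μ ≤ lam
  cover : ∀ c, (∃ p ∈ T, c ∈ p.1) ↔ c ∈ lam ∧ c ∉ μ
  mem : ∀ p ∈ T, flat p ∈ K
  inj : ∀ p ∈ T, ∀ p' ∈ T, flat p = flat p' → p = p'
  south : ∀ p ∈ T, ∀ p' ∈ T, p ≠ p' → ∀ i j, (i + 1, j) ∈ p.1 → (i, j) ∈ p'.1 →
    lt (flat p') (flat p)
  east : ∀ p ∈ T, ∀ p' ∈ T, p ≠ p' → ∀ i j, (i, j + 1) ∈ p.1 → (i, j) ∈ p'.1 →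
    lt (flat p') (flat p)

variable {n : ℕ} {lt : L × ℤ → L × ℤ → Prop} {μ lam : YoungDiagram}

lemma IsFlat.mono {k : L × ℤ} {K : List (L × ℤ)} {T : Finset (Finset (ℕ × ℕ) × L)}
    (h : IsFlat n lt μ lam K T) : IsFlat n lt μ lam (k :: K) T :=
  { h with mem := fun p hp => List.mem_cons_of_mem _ (h.mem p hp) }

open scoped Classical in
/-- Adding one ribbon whose refined letter exceeds all those in use. -/
lemma IsFlat.add (hn : 1 ≤ n) {k : L × ℤ} {K : List (L × ℤ)}
    {T : Finset (Finset (ℕ × ℕ) × L)} {ν : YoungDiagram} (hkK : ∀ k' ∈ K, lt k' k)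
    (hk : k ∉ K) (hrho : rho lam = bump n k.2 (rho ν)) (h : IsFlat n lt μ ν K T) :
    IsFlat n lt μ lam (k :: K) (insert (lam.cells \ ν.cells, k.1) T) := by
  obtain ⟨hle, hr⟩ := isRib_of_rho hrho
  have hflat : flat (lam.cells \ ν.cells, k.1) = k := by
    rw [flat, hr.tailContent_eq hn]
  have hsub : ∀ p ∈ T, ∀ c ∈ p.1, c ∈ ν := fun p hp c hc => ((h.cover c).1 ⟨p, hp, hc⟩).1
  have hmt : ∀ c, c ∈ lam.cells \ ν.cells ↔ c ∈ lam ∧ c ∉ ν := fun c => by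
    rw [Finset.mem_sdiff, YoungDiagram.mem_cells, YoungDiagram.mem_cells]
  have hdisj : ∀ p ∈ T, Disjoint p.1 (lam.cells \ ν.cells) := fun p hp =>
    Finset.disjoint_left.2 fun c hc hc' => ((hmt c).1 hc').2 (hsub p hp c hc)
  refine ⟨?_, ?_, h.le.trans hle, fun c => ?_, ?_, ?_, ?_, ?_⟩
  · intro p hp
    rcases Finset.mem_insert.1 hp with rfl | hp
    · exact isRibbon_of_rho hrho
    · exact h.ribbon p hp
  · intro p hp p' hp' hne
    rcases Finset.mem_insert.1 hp with rfl | hp <;> rcases Finset.mem_insert.1 hp' with rfl | hp'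
    · exact absurd rfl hne
    · exact (hdisj p' hp').symm
    · exact hdisj p hp
    · exact h.disj p hp p' hp' hne
  · constructor
    · rintro ⟨p, hp, hc⟩
      rcases Finset.mem_insert.1 hp with rfl | hp
      · have := (hmt c).1 hc
        exact ⟨this.1, fun h' => this.2 (h.le h')⟩
      · have := (h.cover c).1 ⟨p, hp, hc⟩
        exact ⟨hle this.1, this.2⟩
    · rintro ⟨h1, h2⟩
      by_cases hc : c ∈ ν
      · obtain ⟨p, hp, hcp⟩ := (h.cover c).2 ⟨hc, h2⟩
        exact ⟨p, Finset.mem_insert_of_mem hp, hcp⟩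
      · exact ⟨_, Finset.mem_insert_self _ _, (hmt c).2 ⟨h1, hc⟩⟩
  · intro p hp
    rcases Finset.mem_insert.1 hp with rfl | hp
    · rw [hflat]; exact List.mem_cons_self
    · exact List.mem_cons_of_mem _ (h.mem p hp)
  · intro p hp p' hp' he
    rcases Finset.mem_insert.1 hp with rfl | hp <;> rcases Finset.mem_insert.1 hp' with rfl | hp'
    · rfl
    · rw [hflat] at he; exact absurd (he ▸ h.mem p' hp') hk
    · rw [hflat] at he; exact absurd (he ▸ h.mem p hp) hk
    · exact h.inj p hp p' hp' he
  · intro p hp p' hp' hne i j hc hc'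
    rcases Finset.mem_insert.1 hp with rfl | hp <;> rcases Finset.mem_insert.1 hp' with rfl | hp'
    · exact absurd rfl hne
    · rw [hflat]; exact hkK _ (h.mem p' hp')
    · exact absurd (ν.up_left_mem (Nat.le_succ i) le_rfl (hsub p hp _ hc)) ((hmt _).1 hc').2
    · exact h.south p hp p' hp' hne i j hc hc'
  · intro p hp p' hp' hne i j hc hc'
    rcases Finset.mem_insert.1 hp with rfl | hp <;> rcases Finset.mem_insert.1 hp' with rfl | hp'
    · exact absurd rfl hne
    · rw [hflat]; exact hkK _ (h.mem p' hp')
    · exact absurd (ν.up_left_mem le_rfl (Nat.le_succ j) (hsub p hp _ hc)) ((hmt _).1 hc').2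
    · exact h.east p hp p' hp' hne i j hc hc'

open scoped Classical in
/-- Peeling off the largest refined letter of a standardized tableau. -/
lemma isFlat_cons_iff (hn : 1 ≤ n) (hlt : ∀ k k', lt k k' → ¬lt k' k) {k : L × ℤ}
    {K : List (L × ℤ)} (hkK : ∀ k' ∈ K, lt k' k) (T : Finset (Finset (ℕ × ℕ) × L)) :
    IsFlat n lt μ lam (k :: K) T ↔ IsFlat n lt μ lam K T ∨
      ∃ ν, rho lam = bump n k.2 (rho ν) ∧ ∃ T', IsFlat n lt μ ν K T' ∧
        insert (lam.cells \ ν.cells, k.1) T' = T := by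
  have hk : k ∉ K := fun h => hlt _ _ (hkK k h) (hkK k h)
  constructor
  swap
  · rintro (h | ⟨ν, hrho, T', h, rfl⟩)
    · exact h.mono
    · exact h.add hn hkK hk hrho
  intro h
  by_cases hex : ∃ p ∈ T, flat p = k
  swap
  · left
    refine { h with mem := fun p hp => ?_ }
    rcases List.mem_cons.1 (h.mem p hp) with h1 | h1
    · exact absurd ⟨p, hp, h1⟩ hex
    · exact h1
  right
  obtain ⟨⟨t, a⟩, hp, hpk⟩ := hex
  have ha : a = k.1 := by rw [← hpk]; rfl
  subst ha
  have hother : ∀ p ∈ T, p ≠ (t, k.1) → flat p ∈ K := by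
    intro p hp' hne
    rcases List.mem_cons.1 (h.mem p hp') with h1 | h1
    · exact absurd (h.inj p hp' _ hp (h1.trans hpk.symm)) hne
    · exact h1
  have ht : ∀ c ∈ t, c ∈ lam ∧ c ∉ μ := fun c hc => (h.cover c).1 ⟨_, hp, hc⟩
  have hlow : IsLowerSet ((lam.cells \ t : Finset (ℕ × ℕ)) : Set (ℕ × ℕ)) := by
    refine isLowerSet_of_step (fun i j hij => ?_) (fun i j hij => ?_)
    · rw [Finset.mem_coe, Finset.mem_sdiff, YoungDiagram.mem_cells] at hij ⊢
      refine ⟨lam.up_left_mem (Nat.le_succ i) le_rfl hij.1, fun hc => ?_⟩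
      have hμ : (i + 1, j) ∉ μ := fun h' =>
        (ht _ hc).2 (μ.up_left_mem (Nat.le_succ i) le_rfl h')
      obtain ⟨p', hp', hc'⟩ := (h.cover (i + 1, j)).2 ⟨hij.1, hμ⟩
      have hne : p' ≠ (t, k.1) := by rintro rfl; exact hij.2 hc'
      have h1 := h.south p' hp' _ hp hne i j hc' hc
      rw [hpk] at h1
      exact hlt _ _ h1 (hkK _ (hother p' hp' hne))
    · rw [Finset.mem_coe, Finset.mem_sdiff, YoungDiagram.mem_cells] at hij ⊢
      refine ⟨lam.up_left_mem le_rfl (Nat.le_succ j) hij.1, fun hc => ?_⟩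
      have hμ : (i, j + 1) ∉ μ := fun h' =>
        (ht _ hc).2 (μ.up_left_mem le_rfl (Nat.le_succ j) h')
      obtain ⟨p', hp', hc'⟩ := (h.cover (i, j + 1)).2 ⟨hij.1, hμ⟩
      have hne : p' ≠ (t, k.1) := by rintro rfl; exact hij.2 hc'
      have h1 := h.east p' hp' _ hp hne i j hc' hc
      rw [hpk] at h1
      exact hlt _ _ h1 (hkK _ (hother p' hp' hne))
  set ν : YoungDiagram := ⟨lam.cells \ t, hlow⟩ with hν
  have hmν : ∀ c, c ∈ ν ↔ c ∈ lam ∧ c ∉ t := fun c => by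
    rw [← YoungDiagram.mem_cells, hν, Finset.mem_sdiff, YoungDiagram.mem_cells]
  have hνle : ν ≤ lam := fun c hc => ((hmν c).1 hc).1
  have hdiff : lam.cells \ ν.cells = t := by
    ext c
    rw [Finset.mem_sdiff, YoungDiagram.mem_cells, YoungDiagram.mem_cells, hmν]
    constructor
    · rintro ⟨h1, h2⟩
      by_contra h3
      exact h2 ⟨h1, h3⟩
    · exact fun hc => ⟨(ht c hc).1, fun h2 => h2.2 hc⟩
  have hdt : ∀ p ∈ T, p ≠ (t, k.1) → ∀ c ∈ p.1, c ∉ t := fun p hp' hne c hc hc' =>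
    Finset.disjoint_left.1 (h.disj p hp' _ hp hne) hc hc'
  have hrib : IsRibbon n (lam.cells \ ν.cells) := by rw [hdiff]; exact h.ribbon _ hp
  refine ⟨ν, ?_, T.erase (t, k.1), ?_, ?_⟩
  · rw [rho_of_ribbon hn hνle hrib, hdiff]
    congr 1
    rw [← hpk]
    rfl
  · refine ⟨fun p hp' => h.ribbon p (Finset.mem_of_mem_erase hp'), fun p hp1 p' hp2 hne =>
      h.disj p (Finset.mem_of_mem_erase hp1) p' (Finset.mem_of_mem_erase hp2) hne,
      fun c hc => (hmν c).2 ⟨h.le hc, fun hc' => (ht c hc').2 hc⟩, fun c => ?_,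
      fun p hp' => hother p (Finset.mem_of_mem_erase hp') (Finset.ne_of_mem_erase hp'),
      fun p hp1 p' hp2 =>
        h.inj p (Finset.mem_of_mem_erase hp1) p' (Finset.mem_of_mem_erase hp2),
      fun p hp1 p' hp2 =>
        h.south p (Finset.mem_of_mem_erase hp1) p' (Finset.mem_of_mem_erase hp2),
      fun p hp1 p' hp2 =>
        h.east p (Finset.mem_of_mem_erase hp1) p' (Finset.mem_of_mem_erase hp2)⟩
    constructor
    · rintro ⟨p, hp', hc⟩
      have h1 := (h.cover c).1 ⟨p, Finset.mem_of_mem_erase hp', hc⟩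
      exact ⟨(hmν c).2 ⟨h1.1, hdt p (Finset.mem_of_mem_erase hp') (Finset.ne_of_mem_erase hp')
        c hc⟩, h1.2⟩
    · rintro ⟨h1, h2⟩
      rw [hmν] at h1
      obtain ⟨p, hp', hc⟩ := (h.cover c).2 ⟨h1.1, h2⟩
      refine ⟨p, Finset.mem_erase.2 ⟨?_, hp'⟩, hc⟩
      rintro rfl
      exact h1.2 hc
  · rw [hdiff]
    exact Finset.insert_erase hp

lemma isFlat_nil_iff (T : Finset (Finset (ℕ × ℕ) × L)) :
    IsFlat n lt μ lam [] T ↔ T = ∅ ∧ μ = lam := by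
  constructor
  · intro h
    have hT : T = ∅ := Finset.eq_empty_of_forall_notMem fun p hp => by
      simpa using h.mem p hp
    refine ⟨hT, le_antisymm h.le fun c hc => ?_⟩
    by_contra hc'
    obtain ⟨p, hp, -⟩ := (h.cover c).2 ⟨hc, hc'⟩
    simp [hT] at hp
  · rintro ⟨rfl, rfl⟩
    refine ⟨by simp, by simp, le_rfl, fun c => ?_, by simp, by simp, by simp, by simp⟩
    simp

open scoped Classical in
/-- The finite set of all standardized tableaux of shape `lam / μ`. -/
noncomputable def flatTableaux [Fintype L] (n : ℕ) (lt : L × ℤ → L × ℤ → Prop)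
    (μ lam : YoungDiagram) (K : List (L × ℤ)) : Finset (Finset (Finset (ℕ × ℕ) × L)) :=
  ((lam.cells \ μ.cells).powerset ×ˢ (Finset.univ : Finset L)).powerset.filter
    (IsFlat n lt μ lam K)

lemma mem_flatTableaux [Fintype L] {K : List (L × ℤ)} {T : Finset (Finset (ℕ × ℕ) × L)} :
    T ∈ flatTableaux n lt μ lam K ↔ IsFlat n lt μ lam K T := by
  classical
  rw [flatTableaux, Finset.mem_filter, and_iff_right_iff_imp]
  intro h
  rw [Finset.mem_powerset]
  intro p hp
  refine Finset.mem_product.2 ⟨Finset.mem_powerset.2 fun c hc => ?_, Finset.mem_univ _⟩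
  rw [Finset.mem_sdiff, YoungDiagram.mem_cells, YoungDiagram.mem_cells]
  exact (h.cover c).1 ⟨p, hp, hc⟩

/-- The generating function of standardized tableaux is a matrix coefficient of the product
of the operators `1 + w u_p`, the largest refined letter acting last. -/
lemma sum_flatTableaux [Fintype L] {R : Type*} [CommRing R] (q : Rˣ) (w : L → R)
    (hn : 1 ≤ n) (hlt : ∀ k k', lt k k' → ¬lt k' k) (K : List (L × ℤ))
    (hK : K.Pairwise fun k k' => lt k' k) :
    ∑ T ∈ flatTableaux n lt μ lam K, ∏ p ∈ T, (w p.2 * (q : R) ^ spin p.1) =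
      (K.map fun k => (1 + w k.1 • ribOp n q k.2 : Module.End R ((ℤ → ℤ) →₀ R))).prod
        (Finsupp.single (rho μ) 1) (rho lam) := by
  classical
  induction K generalizing lam with
  | nil =>
    by_cases h : μ = lam
    · have : flatTableaux n lt μ lam ([] : List (L × ℤ)) = {∅} := by
        ext T
        rw [mem_flatTableaux, isFlat_nil_iff, Finset.mem_singleton, and_iff_left h]
      rw [this, h]
      simp
    · have : flatTableaux n lt μ lam ([] : List (L × ℤ)) = ∅ := by
        ext T
        rw [mem_flatTableaux, isFlat_nil_iff]
        simp [h]
      rw [this]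
      have hr : rho lam ≠ rho μ := fun h' => h (rho_injective h').symm
      simp [Finsupp.single_eq_of_ne hr]
  | cons k K ih =>
    rw [List.pairwise_cons] at hK
    have hk : k ∉ K := fun h => hlt _ _ (hK.1 k h) (hK.1 k h)
    rw [List.map_cons, List.prod_cons, Module.End.mul_apply, LinearMap.add_apply,
      Module.End.one_apply, LinearMap.smul_apply, Finsupp.add_apply, Finsupp.smul_apply,
      ← ih hK.2]
    set v := (K.map fun k => (1 + w k.1 • ribOp n q k.2 : Module.End R ((ℤ → ℤ) →₀ R))).prod
        (Finsupp.single (rho μ) 1) with hv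
    have happ := ribOp_apply n q k.2 v (rho lam)
    by_cases hex : ∃ ν, rho lam = bump n k.2 (rho ν)
    · obtain ⟨ν, hν⟩ := hex
      have huniq : ∀ ν', rho lam = bump n k.2 (rho ν') → ν' = ν := by
        intro ν' h'
        refine rho_injective (funext fun c => ?_)
        have := congrFun (h'.symm.trans hν) c
        simp only [bump] at this
        split_ifs at this <;> omega
      have hadd := addable_of_rho hn hν
      obtain ⟨hle, hr⟩ := isRib_of_rho hν
      set t := (lam.cells \ ν.cells, k.1) with ht
      have hflat : flat t = k := by
        rw [flat, ht, hr.tailContent_eq hn]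
      have hnotin : ∀ T' ∈ flatTableaux n lt μ ν K, t ∉ T' := fun T' hT' h' =>
        hk (hflat ▸ (mem_flatTableaux.1 hT').mem t h')
      have hset : flatTableaux n lt μ lam (k :: K) =
          flatTableaux n lt μ lam K ∪ (flatTableaux n lt μ ν K).image (insert t) := by
        ext T
        rw [mem_flatTableaux, isFlat_cons_iff hn hlt hK.1, Finset.mem_union, mem_flatTableaux,
          Finset.mem_image]
        refine or_congr_right ⟨?_, ?_⟩
        · rintro ⟨ν', h1, T', h2, h3⟩
          obtain rfl := huniq ν' h1
          exact ⟨T', mem_flatTableaux.2 h2, h3⟩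
        · rintro ⟨T', h2, h3⟩
          exact ⟨ν, hν, T', mem_flatTableaux.1 h2, h3⟩
      have hdisj : Disjoint (flatTableaux n lt μ lam K)
          ((flatTableaux n lt μ ν K).image (insert t)) := by
        refine Finset.disjoint_left.2 fun T h1 h2 => ?_
        obtain ⟨T', -, rfl⟩ := Finset.mem_image.1 h2
        exact hk (hflat ▸ (mem_flatTableaux.1 h1).mem t (Finset.mem_insert_self _ _))
      rw [hset, Finset.sum_union hdisj, Finset.sum_image]
      swap
      · intro T1 h1 T2 h2 h3
        have := congrArg (Finset.erase · t) h3
        simpa [Finset.erase_insert (hnotin T1 h1), Finset.erase_insert (hnotin T2 h2)] using this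
      congr 1
      rw [happ.1 (rho ν) hν.symm hadd, hv, ← ih hK.2, ← hr.spin_eq hn, zpow_natCast,
        Units.val_pow_eq_pow_val, smul_eq_mul, ← mul_assoc, Finset.mul_sum]
      refine Finset.sum_congr rfl fun T' hT' => ?_
      rw [Finset.prod_insert (hnotin T' hT')]
    · have hset : flatTableaux n lt μ lam (k :: K) = flatTableaux n lt μ lam K := by
        ext T
        rw [mem_flatTableaux, isFlat_cons_iff hn hlt hK.1, mem_flatTableaux]
        refine or_iff_left ?_
        rintro ⟨ν', h1, -⟩
        exact hex ⟨ν', h1⟩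
      rw [hset, happ.2, smul_zero, add_zero]
      intro f hf hadd
      obtain ⟨ν, rfl⟩ := exists_remove n k.2 lam f hf hadd
      exact hex ⟨ν, hf.symm⟩

end Flat
end SuperLLT

/-! ### Cellwise description and transposition of tableaux -/

namespace SuperLLT

section Tableaux

variable {L : Type*} [LinearOrder L]

/-- Super ribbon tableaux, described cell by cell: `weak` says that labels weakly increase
towards the south-east, `north` and `west` are the two strip conditions. -/
structure IsTab (n : ℕ) (μ lam : YoungDiagram) (horiz : L → Prop)
    (T : Finset (Finset (ℕ × ℕ) × L)) : Prop where
  ribbon : ∀ p ∈ T, IsRibbon n p.1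
  disj : ∀ p ∈ T, ∀ p' ∈ T, p ≠ p' → Disjoint p.1 p'.1
  le : μ ≤ lam
  cover : ∀ c, (∃ p ∈ T, c ∈ p.1) ↔ c ∈ lam ∧ c ∉ μ
  weak : ∀ p ∈ T, ∀ p' ∈ T, ∀ c ∈ p.1, ∀ c' ∈ p'.1, c' ≤ c → p'.2 ≤ p.2
  north : ∀ p ∈ T, ∀ p' ∈ T, horiz p.2 → p'.2 = p.2 → ∀ i j, topRight p.1 = (i + 1, j) →
    (i, j) ∉ p'.1
  west : ∀ p ∈ T, ∀ p' ∈ T, ¬horiz p.2 → p'.2 = p.2 → ∀ i j, bottomLeft p.1 = (i, j + 1) →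
    (i, j) ∉ p'.1

variable {n : ℕ} {μ lam : YoungDiagram} {horiz : L → Prop} {T : Finset (Finset (ℕ × ℕ) × L)}

lemma isSuperTableau_iff :
    IsSuperTableau n μ lam (fun a b => a ≤ b) horiz T ↔ IsTab n μ lam horiz T := by
  classical
  have hstrip : ∀ (a : L) (c : ℕ × ℕ),
      (c ∈ (T.filter fun p' => p'.2 = a).sup fun p' => p'.1) ↔ ∃ p' ∈ T, p'.2 = a ∧ c ∈ p'.1 := by
    intro a c
    simp only [Finset.mem_sup, Finset.mem_filter, and_assoc]
  have hunion : ∀ (a : L) (c : ℕ × ℕ),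
      (c ∈ μ.cells ∪ ((T.filter fun p => p.2 ≤ a).sup fun p => p.1)) ↔
        c ∈ μ ∨ ∃ p ∈ T, p.2 ≤ a ∧ c ∈ p.1 := by
    intro a c
    simp only [Finset.mem_union, YoungDiagram.mem_cells, Finset.mem_sup, Finset.mem_filter,
      and_assoc]
  constructor
  · rintro ⟨h1, h2, h3, h4, h5, h6⟩
    have hcov : ∀ c, (∃ p ∈ T, c ∈ p.1) ↔ c ∈ lam ∧ c ∉ μ := by
      intro c
      rw [← YoungDiagram.mem_cells, ← YoungDiagram.mem_cells, ← Finset.mem_sdiff, ← h4,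
        Finset.mem_sup]
    refine ⟨h2, h3, h1, hcov, ?_, ?_, ?_⟩
    · intro p hp p' hp' c hc c' hc' hle
      obtain ⟨ν, hν⟩ := h5 p.2
      have hν' : ∀ c, c ∈ ν ↔ c ∈ μ ∨ ∃ p' ∈ T, p'.2 ≤ p.2 ∧ c ∈ p'.1 := by
        intro c
        rw [← YoungDiagram.mem_cells, hν]
        exact (Eq.to_iff (by congr)).trans (hunion p.2 c)
      have hcν : c ∈ ν := (hν' c).2 (Or.inr ⟨p, hp, le_rfl, hc⟩)
      have hc'ν : c' ∈ ν := ν.isLowerSet hle hcν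
      rcases (hν' c').1 hc'ν with h | ⟨p'', hp'', hl, hm⟩
      · exact absurd h ((hcov c').1 ⟨p', hp', hc'⟩).2
      · by_cases he : p'' = p'
        · exact he ▸ hl
        · exact absurd hc' (Finset.disjoint_left.1 (h3 _ hp'' _ hp' he) hm)
    · intro p hp p' hp' hh he i j ht hm
      have := (h6 p hp).1 hh
      rw [ht] at this
      rcases this with h | h
      · simp at h
      · exact h ((Eq.to_iff (by congr)).mpr ((hstrip p.2 (i, j)).2 ⟨p', hp', he, hm⟩))
    · intro p hp p' hp' hh he i j ht hm
      have := (h6 p hp).2 hh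
      rw [ht] at this
      rcases this with h | h
      · simp at h
      · exact h ((Eq.to_iff (by congr)).mpr ((hstrip p.2 (i, j)).2 ⟨p', hp', he, hm⟩))
  · intro h
    refine ⟨h.le, h.ribbon, h.disj, ?_, ?_, ?_⟩
    · ext c
      rw [Finset.mem_sup, h.cover, Finset.mem_sdiff, YoungDiagram.mem_cells,
        YoungDiagram.mem_cells]
    · intro a
      refine ⟨⟨μ.cells ∪ ((T.filter fun p => p.2 ≤ a).sup fun p => p.1), ?_⟩, ?_⟩
      swap
      · dsimp only
        congr
      intro c c' hle hc
      rw [Finset.mem_coe, hunion] at hc ⊢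
      rcases hc with hc | ⟨p, hp, hpa, hc⟩
      · exact Or.inl (μ.isLowerSet hle hc)
      · by_cases hμ : c' ∈ μ
        · exact Or.inl hμ
        · have hl : c' ∈ lam := lam.isLowerSet hle ((h.cover c).1 ⟨p, hp, hc⟩).1
          obtain ⟨p', hp', hc'⟩ := (h.cover c').2 ⟨hl, hμ⟩
          exact Or.inr ⟨p', hp', (h.weak p hp p' hp' c hc c' hc' hle).trans hpa, hc'⟩
    · intro p hp
      constructor
      · intro hh
        rcases ht : topRight p.1 with ⟨i, j⟩
        rcases i with _ | i
        · exact Or.inl rfl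
        · right
          intro hm
          obtain ⟨p', hp', he, hm⟩ := (hstrip p.2 (i, j)).1 ((Eq.to_iff (by congr)).mp hm)
          exact h.north p hp p' hp' hh he i j ht hm
      · intro hh
        rcases ht : bottomLeft p.1 with ⟨i, j⟩
        rcases j with _ | j
        · exact Or.inl rfl
        · right
          intro hm
          obtain ⟨p', hp', he, hm⟩ := (hstrip p.2 (i, j)).1 ((Eq.to_iff (by congr)).mp hm)
          exact h.west p hp p' hp' hh he i j ht hm

end Tableaux

section Transpose

/-- Transposition of finite sets of cells. -/
def tr : Finset (ℕ × ℕ) ≃ Finset (ℕ × ℕ) := (Equiv.prodComm ℕ ℕ).finsetCongr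

lemma mem_tr {t : Finset (ℕ × ℕ)} {i j : ℕ} : (i, j) ∈ tr t ↔ (j, i) ∈ t := by
  simp [tr, Equiv.finsetCongr]

lemma tr_tr (t : Finset (ℕ × ℕ)) : tr (tr t) = t := by
  ext ⟨i, j⟩
  rw [mem_tr, mem_tr]

variable {n : ℕ} {p : ℤ} {g : ℤ → ℤ} {t : Finset (ℕ × ℕ)}

/-- Transposition negates contents, so it exchanges the tail and the head of a ribbon. -/
lemma IsRib.tr (h : IsRib n p g t) :
    IsRib n (-(p + n - 1)) (fun c => g (-c) - c) (tr t) := by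
  refine ⟨fun c h1 h2 => ?_, fun c h1 h2 => ?_, fun i j => ?_⟩
  · have := h.step (-(c - 1)) (by omega) (by omega)
    rw [show -(c - 1) - 1 = -c by ring] at this
    omega
  · have := h.nonneg (-c) (by omega) (by omega)
    omega
  · rw [mem_tr, h.mem, show -((j : ℤ) - i) = (i : ℤ) - j by ring]
    constructor <;> rintro ⟨h1, h2, h3⟩ <;> refine ⟨?_, ?_, ?_⟩ <;> omega

lemma IsRibbon.tr (hn : 1 ≤ n) (h : IsRibbon n t) : IsRibbon n (tr t) := by
  obtain ⟨p, g, hr⟩ := exists_isRib hn h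
  obtain ⟨-, ⟨μ, lam, hle, ht⟩, -, -⟩ := h
  refine ⟨hr.tr.card_eq, ⟨μ.transpose, lam.transpose, YoungDiagram.transpose_mono hle, ?_⟩,
    hr.tr.connected, hr.tr.noTwoByTwo⟩
  ext ⟨i, j⟩
  rw [mem_tr, ht]
  simp only [Finset.mem_sdiff, YoungDiagram.mem_cells, YoungDiagram.mem_transpose, Prod.swap]

lemma topRight_tr (hn : 1 ≤ n) (h : IsRibbon n t) : topRight (tr t) = (bottomLeft t).swap := by
  obtain ⟨p, g, hr⟩ := exists_isRib hn h
  have h1 := hr.bottomLeft_spec hn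
  have h2 := hr.tr.topRight_spec hn
  rw [show -(-(p + (n : ℤ) - 1) + n - 1) = p by ring] at h2
  simp only [content] at h1 h2
  ext <;> simp only [Prod.fst_swap, Prod.snd_swap] <;> omega

lemma bottomLeft_tr (hn : 1 ≤ n) (h : IsRibbon n t) :
    bottomLeft (tr t) = (topRight t).swap := by
  have := topRight_tr hn (h.tr hn)
  rw [tr_tr] at this
  rw [this, Prod.swap_swap]

lemma tailContent_tr (hn : 1 ≤ n) (h : IsRibbon n t) :
    tailContent (tr t) = -(tailContent t + n - 1) := by
  obtain ⟨p, g, hr⟩ := exists_isRib hn h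
  rw [hr.tailContent_eq hn, hr.tr.tailContent_eq hn]

lemma spin_tr (hn : 1 ≤ n) (h : IsRibbon n t) : spin t + spin (tr t) = n - 1 := by
  obtain ⟨p, g, hr⟩ := exists_isRib hn h
  have h1 := hr.spin_eq hn
  have h2 := hr.tr.spin_eq hn
  rw [show -(-(p + (n : ℤ) - 1) + n - 1) = p by ring,
    show - -(p + (n : ℤ) - 1) = p + n - 1 by ring] at h2
  omega

variable {L L' : Type*}

/-- Transposition of tableaux: ribbons are transposed and relabelled along `e`. -/
def trTab (e : L ≃ L') :
    Finset (Finset (ℕ × ℕ) × L) ≃ Finset (Finset (ℕ × ℕ) × L') :=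
  (Equiv.prodCongr tr e).finsetCongr

lemma mem_trTab {e : L ≃ L'} {T : Finset (Finset (ℕ × ℕ) × L)} {p : Finset (ℕ × ℕ) × L'} :
    p ∈ trTab e T ↔ ∃ p₀ ∈ T, (tr p₀.1, e p₀.2) = p := by
  simp only [trTab, Equiv.finsetCongr_apply, Finset.mem_map, Equiv.coe_toEmbedding,
    Equiv.prodCongr_apply, Prod.map]

lemma trTab_symm (e : L ≃ L') (T : Finset (Finset (ℕ × ℕ) × L')) :
    (trTab e).symm T = trTab e.symm T := by
  rw [Equiv.symm_apply_eq]
  ext ⟨t, a⟩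
  constructor
  · intro h
    refine mem_trTab.2 ⟨(tr t, e.symm a), mem_trTab.2 ⟨(t, a), h, rfl⟩, ?_⟩
    simp [tr_tr]
  · rintro h
    obtain ⟨p₀, h₀, he⟩ := mem_trTab.1 h
    obtain ⟨p₁, h₁, rfl⟩ := mem_trTab.1 h₀
    simp only [tr_tr, Equiv.apply_symm_apply] at he
    exact he ▸ h₁

variable [LinearOrder L] [LinearOrder L'] {μ lam : YoungDiagram} {horiz : L → Prop}
  {horiz' : L' → Prop} {T : Finset (Finset (ℕ × ℕ) × L)}

lemma IsTab.tr (hn : 1 ≤ n) (e : L ≃ L') (he : ∀ a b, e a ≤ e b ↔ a ≤ b)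
    (hh : ∀ a, horiz' (e a) ↔ ¬horiz a) (h : IsTab n μ lam horiz T) :
    IsTab n μ.transpose lam.transpose horiz' (trTab e T) := by
  refine ⟨?_, ?_, YoungDiagram.transpose_mono h.le, ?_, ?_, ?_, ?_⟩
  · intro p hp
    obtain ⟨p, hq, rfl⟩ := mem_trTab.1 hp
    exact (h.ribbon p hq).tr hn
  · intro p hp p' hp' hne
    obtain ⟨p, hq, rfl⟩ := mem_trTab.1 hp
    obtain ⟨p', hq', rfl⟩ := mem_trTab.1 hp'
    refine Finset.disjoint_left.2 ?_
    rintro ⟨i, j⟩ h1 h2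
    exact Finset.disjoint_left.1 (h.disj p hq p' hq' (fun h => hne (by rw [h])))
      (mem_tr.1 h1) (mem_tr.1 h2)
  · rintro ⟨i, j⟩
    rw [YoungDiagram.mem_transpose, YoungDiagram.mem_transpose, Prod.swap_prod_mk, ← h.cover]
    constructor
    · rintro ⟨p, hp, hc⟩
      obtain ⟨p, hq, rfl⟩ := mem_trTab.1 hp
      exact ⟨p, hq, mem_tr.1 hc⟩
    · rintro ⟨p, hp, hc⟩
      exact ⟨_, mem_trTab.2 ⟨p, hp, rfl⟩, mem_tr.2 hc⟩
  · rintro p hp p' hp' ⟨i, j⟩ hc ⟨i', j'⟩ hc' hle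
    obtain ⟨p, hq, rfl⟩ := mem_trTab.1 hp
    obtain ⟨p', hq', rfl⟩ := mem_trTab.1 hp'
    exact (he _ _).2 (h.weak p hq p' hq' _ (mem_tr.1 hc) _ (mem_tr.1 hc') ⟨hle.2, hle.1⟩)
  · intro p hp p' hp' hz heq i j ht hm
    obtain ⟨p, hq, rfl⟩ := mem_trTab.1 hp
    obtain ⟨p', hq', rfl⟩ := mem_trTab.1 hp'
    rw [topRight_tr hn (h.ribbon p hq), Prod.swap_eq_iff_eq_swap] at ht
    exact h.west p hq p' hq' ((hh _).1 hz) (e.injective heq) j i ht (mem_tr.1 hm)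
  · intro p hp p' hp' hz heq i j ht hm
    obtain ⟨p, hq, rfl⟩ := mem_trTab.1 hp
    obtain ⟨p', hq', rfl⟩ := mem_trTab.1 hp'
    rw [bottomLeft_tr hn (h.ribbon p hq), Prod.swap_eq_iff_eq_swap] at ht
    exact h.north p hq p' hq' (not_not.1 (fun h' => hz ((hh _).2 h'))) (e.injective heq) j i ht
      (mem_tr.1 hm)

end Transpose
end SuperLLT

/-! ### Standardization of super tableaux -/

namespace SuperLLT

section Standardization

variable {L : Type*} [LinearOrder L] {n : ℕ} {μ lam : YoungDiagram} {horiz : L → Prop}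
  {T : Finset (Finset (ℕ × ℕ) × L)}

/-- In a horizontal strip, a ribbon whose tail is weakly further left lies strictly above
another one on every diagonal which they share. -/
lemma IsTab.row_lt (hn : 1 ≤ n) (h : IsTab n μ lam horiz T) {p p' : Finset (ℕ × ℕ) × L}
    (hp : p ∈ T) (hp' : p' ∈ T) (hne : p ≠ p') (hz : horiz p.2) (hl : p'.2 = p.2) {a a' : ℤ}
    {g g' : ℤ → ℤ} (hr : IsRib n a g p.1) (hr' : IsRib n a' g' p'.1) (haa : a ≤ a') {k : ℤ}
    (hk : a' ≤ k) (hk' : k < a + n) : g k < g' k := by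
  have hdisj := Finset.disjoint_left.1 (h.disj p hp p' hp' hne)
  have hneq : ∀ k, a' ≤ k → k < a + n → g k ≠ g' k := by
    intro k h1 h2 he
    obtain ⟨i, j, hm, hi, hc⟩ := hr.exists_mem (c := k) (by omega) h2
    refine hdisj hm ((hr'.mem i j).2 ?_)
    rw [hc]
    omega
  obtain ⟨m, rfl⟩ : ∃ m : ℕ, k = a + n - 1 - m := ⟨(a + n - 1 - k).toNat, by omega⟩
  induction m with
  | zero =>
    simp only [Nat.cast_zero, sub_zero] at hk hk' ⊢
    by_contra hlt
    have hlt' : g' (a + n - 1) < g (a + n - 1) :=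
      lt_of_le_of_ne (not_lt.1 hlt) (Ne.symm (hneq _ hk hk'))
    -- The cell above the head of `p` lies between a cell of `p'` and the head of `p`.
    obtain ⟨ht1, ht2, ht3⟩ := hr.topRight_spec hn
    obtain ⟨i', j', hm', hi', hc'⟩ := hr'.exists_mem (c := a + n - 1) hk (by omega)
    rcases ht : topRight p.1 with ⟨i, j⟩
    rw [ht] at ht1 ht2 ht3
    simp only [content] at ht2 ht3
    obtain ⟨i, rfl⟩ : ∃ i₀, i = i₀ + 1 := ⟨i - 1, by omega⟩
    have hle1 : ((i', j') : ℕ × ℕ) ≤ (i, j) := ⟨by simp only; omega, by simp only; omega⟩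
    have hle2 : ((i, j) : ℕ × ℕ) ≤ (i + 1, j) := ⟨by simp only; omega, le_rfl⟩
    have c1 : (i, j) ∈ lam := lam.isLowerSet hle2 ((h.cover _).1 ⟨p, hp, ht1⟩).1
    have c2 : (i, j) ∉ μ := fun hm =>
      ((h.cover _).1 ⟨p', hp', hm'⟩).2 (μ.isLowerSet hle1 hm)
    obtain ⟨p'', hp'', hm''⟩ := (h.cover _).2 ⟨c1, c2⟩
    have w1 := h.weak p'' hp'' p' hp' _ hm'' _ hm' hle1
    have w2 := h.weak p hp p'' hp'' _ ht1 _ hm'' hle2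
    exact h.north p hp p'' hp'' hz (le_antisymm w2 (hl ▸ w1)) i j ht hm''
  | succ m ih =>
    push_cast at hk hk' ⊢
    have h1 := ih (by omega) (by omega)
    have h2 := hr.step (a + n - 1 - m) (by omega) (by omega)
    have h3 := hr'.step (a + n - 1 - m) (by omega) (by omega)
    have h4 := hneq (a + n - 1 - m - 1) (by omega) (by omega)
    rw [show a + (n : ℤ) - 1 - (m + 1) = a + n - 1 - m - 1 by ring]
    omega

lemma IsTab.horiz_inj (hn : 1 ≤ n) (h : IsTab n μ lam horiz T) {p p' : Finset (ℕ × ℕ) × L}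
    (hp : p ∈ T) (hp' : p' ∈ T) (hz : horiz p.2) (hl : p'.2 = p.2)
    (ht : tailContent p.1 = tailContent p'.1) : p = p' := by
  by_contra hne
  obtain ⟨a, g, hr⟩ := exists_isRib hn (h.ribbon p hp)
  obtain ⟨a', g', hr'⟩ := exists_isRib hn (h.ribbon p' hp')
  rw [hr.tailContent_eq hn, hr'.tailContent_eq hn] at ht
  subst ht
  have h1 := h.row_lt hn hp hp' hne hz hl hr hr' le_rfl (k := a) le_rfl (by omega)
  have h2 := h.row_lt hn hp' hp (Ne.symm hne) (hl ▸ hz) hl.symm hr' hr le_rfl (k := a) le_rfl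
    (by omega)
  omega

lemma IsTab.horiz_south (hn : 1 ≤ n) (h : IsTab n μ lam horiz T) {p p' : Finset (ℕ × ℕ) × L}
    (hp : p ∈ T) (hp' : p' ∈ T) (hne : p ≠ p') (hz : horiz p.2) (hl : p'.2 = p.2) {i j : ℕ}
    (hc : (i + 1, j) ∈ p.1) (hc' : (i, j) ∈ p'.1) : tailContent p'.1 < tailContent p.1 := by
  obtain ⟨a, g, hr⟩ := exists_isRib hn (h.ribbon p hp)
  obtain ⟨a', g', hr'⟩ := exists_isRib hn (h.ribbon p' hp')
  rw [hr.tailContent_eq hn, hr'.tailContent_eq hn]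
  by_contra hlt
  have h1 := (hr.mem _ _).1 hc
  have h2 := (hr'.mem _ _).1 hc'
  push_cast at h1
  rw [show (j : ℤ) - (i + 1) = (j : ℤ) - i - 1 by ring] at h1
  by_cases hk : (j : ℤ) - i < a + n
  · have h3 := h.row_lt hn hp hp' hne hz hl hr hr' (by omega) h2.1 hk
    have h4 := hr.step ((j : ℤ) - i) (by omega) hk
    omega
  · obtain ⟨ht1, ht2, ht3⟩ := hr.topRight_spec hn
    rw [show a + (n : ℤ) - 1 = (j : ℤ) - i - 1 by omega] at ht2 ht3
    simp only [content] at ht3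
    refine h.north p hp p' hp' hz hl i j ?_ hc'
    ext <;> simp only <;> omega

lemma IsTab.horiz_east (hn : 1 ≤ n) (h : IsTab n μ lam horiz T) {p p' : Finset (ℕ × ℕ) × L}
    (hp : p ∈ T) (hp' : p' ∈ T) (hne : p ≠ p') (hz : horiz p.2) (hl : p'.2 = p.2) {i j : ℕ}
    (hc : (i, j + 1) ∈ p.1) (hc' : (i, j) ∈ p'.1) : tailContent p'.1 < tailContent p.1 := by
  obtain ⟨a, g, hr⟩ := exists_isRib hn (h.ribbon p hp)
  obtain ⟨a', g', hr'⟩ := exists_isRib hn (h.ribbon p' hp')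
  rw [hr.tailContent_eq hn, hr'.tailContent_eq hn]
  by_contra hlt
  have h1 := (hr.mem _ _).1 hc
  have h2 := (hr'.mem _ _).1 hc'
  push_cast at h1
  rw [show (j : ℤ) + 1 - i = (j : ℤ) - i + 1 by ring] at h1
  have h3 := h.row_lt hn hp hp' hne hz hl hr hr' (by omega) h2.1 (by omega)
  have h4 := hr.step ((j : ℤ) - i + 1) (by omega) (by omega)
  rw [add_sub_cancel_right] at h4
  omega

/-- The order of insertion of refined letters: by label, then by increasing tail content for
a horizontal label and by decreasing tail content for a vertical one. -/
def flatLT (horiz : L → Prop) (k k' : L × ℤ) : Prop :=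
  k.1 < k'.1 ∨ (k.1 = k'.1 ∧ ((horiz k.1 ∧ k.2 < k'.2) ∨ (¬horiz k.1 ∧ k'.2 < k.2)))

lemma flatLT_asymm (horiz : L → Prop) (k k' : L × ℤ) (h : flatLT horiz k k') :
    ¬flatLT horiz k' k := by
  rintro h'
  rcases h with h | ⟨h1, h2⟩
  · rcases h' with h' | ⟨h1', -⟩
    · exact lt_asymm h h'
    · exact h.ne h1'.symm
  · rcases h' with h' | ⟨-, h2'⟩
    · exact h'.ne h1.symm
    · rw [← h1] at h2'
      rcases h2 with ⟨a, b⟩ | ⟨a, b⟩ <;> rcases h2' with ⟨a', b'⟩ | ⟨a', b'⟩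
      · omega
      · exact a' a
      · exact a a'
      · omega

lemma IsTab.tr_refl (hn : 1 ≤ n) (h : IsTab n μ lam horiz T) :
    IsTab n μ.transpose lam.transpose (fun a => ¬horiz a) (trTab (Equiv.refl L) T) :=
  h.tr hn (Equiv.refl L) (fun _ _ => Iff.rfl) (fun _ => Iff.rfl)

/-- Super tableaux are the standardized tableaux for the order `flatLT`.  The facts about
vertical strips are those about horizontal strips, transposed. -/
lemma isTab_iff_isFlat (hn : 1 ≤ n) (K : List (L × ℤ))
    (hK : ∀ (a : L) (i j : ℕ), (i, j) ∈ lam → (a, (j : ℤ) - i) ∈ K) :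
    IsTab n μ lam horiz T ↔ IsFlat n (flatLT horiz) μ lam K T := by
  constructor
  · intro h
    have ht := h.tr_refl hn
    have htm : ∀ p ∈ T, (tr p.1, p.2) ∈ trTab (Equiv.refl L) T := fun p hp =>
      mem_trTab.2 ⟨p, hp, rfl⟩
    have htne : ∀ p p' : Finset (ℕ × ℕ) × L, p ≠ p' → (tr p.1, p.2) ≠ (tr p'.1, p'.2) := by
      intro p p' hne he
      rw [Prod.mk.injEq] at he
      exact hne (Prod.ext (tr.injective he.1) he.2)
    refine ⟨h.ribbon, h.disj, h.le, h.cover, ?_, ?_, ?_, ?_⟩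
    · intro p hp
      obtain ⟨a, g, hr⟩ := exists_isRib hn (h.ribbon p hp)
      obtain ⟨h1, -, -⟩ := hr.bottomLeft_spec hn
      exact hK p.2 _ _ ((h.cover _).1 ⟨p, hp, h1⟩).1
    · intro p hp p' hp' he
      rw [flat, flat, Prod.mk.injEq] at he
      by_cases hz : horiz p.2
      · exact h.horiz_inj hn hp hp' hz he.1.symm he.2
      · by_contra hne
        refine htne _ _ hne (ht.horiz_inj hn (htm p hp) (htm p' hp') hz he.1.symm ?_)
        rw [tailContent_tr hn (h.ribbon p hp), tailContent_tr hn (h.ribbon p' hp'), he.2]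
    · intro p hp p' hp' hne i j hc hc'
      have hw := h.weak p hp p' hp' _ hc _ hc' ⟨by simp, le_rfl⟩
      rcases hw.lt_or_eq with hw | hw
      · exact Or.inl hw
      · refine Or.inr ⟨hw, ?_⟩
        by_cases hz : horiz p.2
        · exact Or.inl ⟨show horiz p'.2 from hw ▸ hz, h.horiz_south hn hp hp' hne hz hw hc hc'⟩
        · refine Or.inr ⟨fun h' : horiz p'.2 => hz (hw ▸ h'), ?_⟩
          have := ht.horiz_east hn (htm p hp) (htm p' hp') (htne _ _ hne) hz hw
            (mem_tr.2 hc) (mem_tr.2 hc')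
          rw [tailContent_tr hn (h.ribbon p hp), tailContent_tr hn (h.ribbon p' hp')] at this
          simp only [flat]
          omega
    · intro p hp p' hp' hne i j hc hc'
      have hw := h.weak p hp p' hp' _ hc _ hc' ⟨le_rfl, by simp⟩
      rcases hw.lt_or_eq with hw | hw
      · exact Or.inl hw
      · refine Or.inr ⟨hw, ?_⟩
        by_cases hz : horiz p.2
        · exact Or.inl ⟨show horiz p'.2 from hw ▸ hz, h.horiz_east hn hp hp' hne hz hw hc hc'⟩
        · refine Or.inr ⟨fun h' : horiz p'.2 => hz (hw ▸ h'), ?_⟩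
          have := ht.horiz_south hn (htm p hp) (htm p' hp') (htne _ _ hne) hz hw
            (mem_tr.2 hc) (mem_tr.2 hc')
          rw [tailContent_tr hn (h.ribbon p hp), tailContent_tr hn (h.ribbon p' hp')] at this
          simp only [flat]
          omega
  · intro h
    have hle : ∀ p p' : Finset (ℕ × ℕ) × L, flatLT horiz (flat p') (flat p) → p'.2 ≤ p.2 := by
      rintro p p' (h | ⟨h, -⟩)
      · exact le_of_lt h
      · exact le_of_eq h
    -- For each label, the union of `μ` and the ribbons with at most this label is a lower set.
    have hlow : ∀ a : L, IsLowerSet {c : ℕ × ℕ | c ∈ μ ∨ ∃ p ∈ T, p.2 ≤ a ∧ c ∈ p.1} := by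
      intro a
      have key : ∀ c c' : ℕ × ℕ, c' ≤ c → (∀ p ∈ T, ∀ p' ∈ T, p ≠ p' → c ∈ p.1 → c' ∈ p'.1 →
          flatLT horiz (flat p') (flat p)) → (c ∈ μ ∨ ∃ p ∈ T, p.2 ≤ a ∧ c ∈ p.1) →
          (c' ∈ μ ∨ ∃ p ∈ T, p.2 ≤ a ∧ c' ∈ p.1) := by
        intro c c' hcc hlt hc
        by_cases hμ : c' ∈ μ
        · exact Or.inl hμ
        rcases hc with hc | ⟨p, hp, hpa, hc⟩
        · exact Or.inl (μ.isLowerSet hcc hc)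
        · have hl : c' ∈ lam := lam.isLowerSet hcc ((h.cover c).1 ⟨p, hp, hc⟩).1
          obtain ⟨p', hp', hc'⟩ := (h.cover c').2 ⟨hl, hμ⟩
          by_cases hpp : p = p'
          · exact Or.inr ⟨p, hp, hpa, hpp ▸ hc'⟩
          · exact Or.inr ⟨p', hp', (hle p p' (hlt p hp p' hp' hpp hc hc')).trans hpa, hc'⟩
      refine isLowerSet_of_step (fun i j => ?_) (fun i j => ?_)
      · exact key _ _ ⟨by simp, le_rfl⟩
          (fun p hp p' hp' hne hc hc' => h.south p hp p' hp' hne i j hc hc')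
      · exact key _ _ ⟨le_rfl, by simp⟩
          (fun p hp p' hp' hne hc hc' => h.east p hp p' hp' hne i j hc hc')
    refine ⟨h.ribbon, h.disj, h.le, h.cover, ?_, ?_, ?_⟩
    · intro p hp p' hp' c hc c' hc' hcc
      rcases hlow p.2 hcc (Or.inr ⟨p, hp, le_rfl, hc⟩) with hm | ⟨p'', hp'', hl, hm⟩
      · exact absurd hm ((h.cover c').1 ⟨p', hp', hc'⟩).2
      · by_cases he : p'' = p'
        · exact he ▸ hl
        · exact absurd hc' (Finset.disjoint_left.1 (h.disj _ hp'' _ hp' he) hm)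
    · intro p hp p' hp' hz hl i j ht hm
      obtain ⟨a, g, hr⟩ := exists_isRib hn (h.ribbon p hp)
      obtain ⟨a', g', hr'⟩ := exists_isRib hn (h.ribbon p' hp')
      obtain ⟨h1, -, h3⟩ := hr.topRight_spec hn
      rw [ht] at h1 h3
      simp only [content] at h3
      push_cast at h3
      have hm' := (hr'.mem _ _).1 hm
      have hne : p ≠ p' := by
        rintro rfl
        have := (hr.mem _ _).1 hm
        omega
      have hlt := h.south p hp p' hp' hne i j h1 hm
      simp only [flatLT, flat, hl, lt_self_iff_false, hz, hr.tailContent_eq hn,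
        hr'.tailContent_eq hn, not_true, false_and, or_false, false_or, true_and] at hlt
      omega
    · intro p hp p' hp' hz hl i j ht hm
      obtain ⟨a, g, hr⟩ := exists_isRib hn (h.ribbon p hp)
      obtain ⟨a', g', hr'⟩ := exists_isRib hn (h.ribbon p' hp')
      obtain ⟨h1, -, h3⟩ := hr.bottomLeft_spec hn
      rw [ht] at h1 h3
      simp only [content] at h3
      push_cast at h3
      have hm' := (hr'.mem _ _).1 hm
      have hne : p ≠ p' := by
        rintro rfl
        have := (hr.mem _ _).1 hm
        omega
      have hlt := h.east p hp p' hp' hne i j h1 hm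
      simp only [flatLT, flat, hl, lt_self_iff_false, hz, hr.tailContent_eq hn,
        hr'.tailContent_eq hn, not_false_iff, false_and, false_or, true_and] at hlt
      omega

end Standardization
end SuperLLT

/-! ### Order independence and conjugation -/

namespace SuperLLT

section OrderIndependence

variable {L : Type*} {R : Type*} [CommRing R]

open scoped Classical in
/-- The signed variable of a letter. -/
noncomputable def signedVar (horiz : L → Prop) (z : L → R) (a : L) : R :=
  if horiz a then z a else -z a

open scoped Classical in
lemma weight_eq_prod [Fintype L] (horiz : L → Prop) (q : R) (z : L → R)
    (T : Finset (Finset (ℕ × ℕ) × L)) :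
    q ^ tabSpin T * ∏ a : L, (if horiz a then z a else -z a) ^ tabWt T a =
      ∏ p ∈ T, (signedVar horiz z p.2 * q ^ spin p.1) := by
  rw [Finset.prod_mul_distrib, Finset.prod_pow_eq_pow_sum, mul_comm, tabSpin]
  congr 1
  rw [← Finset.prod_fiberwise_of_maps_to (s := T) (t := Finset.univ) (g := fun p => p.2)
    (fun _ _ => Finset.mem_univ _)]
  refine Finset.prod_congr rfl fun a _ => ?_
  rw [Finset.prod_congr rfl (g := fun _ => signedVar horiz z a) (fun p hp => by
    rw [(Finset.mem_filter.1 hp).2]), Finset.prod_const, tabWt, signedVar]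

open scoped Classical in
/-- The refined letters with label `a` and tail content in `[-N, N)`, the one inserted last
coming first. -/
noncomputable def block (horiz : L → Prop) (N : ℕ) (a : L) : List (L × ℤ) :=
  if horiz a then ((List.range (2 * N)).map fun i : ℕ => (a, (i : ℤ) - N)).reverse
  else (List.range (2 * N)).map fun i : ℕ => (a, (i : ℤ) - N)

open scoped Classical in
/-- The operator adding a strip labelled `a`: a descending product of ribbon operators for a
horizontal letter, an ascending one for a vertical letter. -/
noncomputable def letterOp (n : ℕ) (q : Rˣ) (horiz : L → Prop) (z : L → R) (N : ℕ) (a : L) :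
    Module.End R ((ℤ → ℤ) →₀ R) :=
  if horiz a then descProd (fun i : ℕ => ribOp n q ((i : ℤ) - N)) (signedVar horiz z a) (2 * N)
  else ascProd (fun i : ℕ => ribOp n q ((i : ℤ) - N)) (signedVar horiz z a) (2 * N)

lemma prod_map_range_eq_ascProd {A : Type*} [Ring A] [Algebra R A] (v : ℕ → A) (y : R) (k : ℕ) :
    ((List.range k).map fun i => 1 + y • v i).prod = ascProd v y k := by
  induction k with
  | zero => simp [ascProd]
  | succ k ih => rw [List.range_succ, List.map_append, List.prod_append, ih]; simp [ascProd]

lemma prod_map_range_reverse_eq_descProd {A : Type*} [Ring A] [Algebra R A] (v : ℕ → A) (y : R)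
    (k : ℕ) : ((List.range k).map fun i => 1 + y • v i).reverse.prod = descProd v y k := by
  induction k with
  | zero => simp [descProd]
  | succ k ih =>
    rw [List.range_succ, List.map_append, List.reverse_append, List.prod_append, ih]
    simp [descProd]

lemma prod_block (n : ℕ) (q : Rˣ) (horiz : L → Prop) (z : L → R) (N : ℕ) (a : L) :
    ((block horiz N a).map fun k => (1 + signedVar horiz z k.1 • ribOp n q k.2 :
      Module.End R ((ℤ → ℤ) →₀ R))).prod = letterOp n q horiz z N a := by
  rw [block, letterOp]
  split_ifs
  · rw [← prod_map_range_reverse_eq_descProd, List.map_reverse, List.map_map]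
    rfl
  · rw [← prod_map_range_eq_ascProd, List.map_map]
    rfl

lemma letterOp_commute (n : ℕ) (hn : 1 ≤ n) (q : Rˣ) (horiz : L → Prop) (z : L → R) (N : ℕ)
    (a b : L) : Commute (letterOp n q horiz z N a) (letterOp n q horiz z N b) := by
  have hQ : ((q ^ 2 : Rˣ) : R) * (((q ^ 2)⁻¹ : Rˣ) : R) = 1 := Units.mul_inv _
  have hv := ribOp_relations n hn q (N : ℤ)
  rw [letterOp, letterOp]
  split_ifs
  · exact desc_desc_comm n hn _ _ hQ _ hv _ _ _
  · exact desc_asc_comm n hn _ _ hQ _ hv _ _ _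
  · exact (desc_asc_comm n hn _ _ hQ _ hv _ _ _).symm
  · exact asc_asc_comm n hn _ _ hQ _ hv _ _ _

lemma mem_block {horiz : L → Prop} {N : ℕ} {a : L} {k : L × ℤ} :
    k ∈ block horiz N a ↔ k.1 = a ∧ -(N : ℤ) ≤ k.2 ∧ k.2 < N := by
  have : k ∈ ((List.range (2 * N)).map fun i : ℕ => (a, (i : ℤ) - N)) ↔
      k.1 = a ∧ -(N : ℤ) ≤ k.2 ∧ k.2 < N := by
    rw [List.mem_map]
    constructor
    · rintro ⟨i, hi, rfl⟩
      rw [List.mem_range] at hi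
      exact ⟨rfl, by simp only; omega, by simp only; omega⟩
    · rintro ⟨rfl, h1, h2⟩
      refine ⟨(k.2 + N).toNat, by rw [List.mem_range]; omega, Prod.ext rfl ?_⟩
      simp only
      omega
  rw [block]
  split_ifs
  · rw [List.mem_reverse, this]
  · exact this

lemma pairwise_block [LinearOrder L] (horiz : L → Prop) (N : ℕ) (a : L) :
    (block horiz N a).Pairwise fun k k' => flatLT horiz k' k := by
  rw [block]
  split_ifs with h
  · rw [List.pairwise_reverse, List.pairwise_map]
    refine List.pairwise_lt_range.imp fun {i j} hij => Or.inr ⟨rfl, Or.inl ⟨h, ?_⟩⟩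
    simp only
    omega
  · rw [List.pairwise_map]
    refine List.pairwise_lt_range.imp fun {i j} hij => Or.inr ⟨rfl, Or.inr ⟨h, ?_⟩⟩
    simp only
    omega

/-- The super LLT polynomial is a matrix coefficient of the product of the commuting
operators `letterOp`, in any order. -/
lemma superLLT_eq_letterOp [Fintype L] [LinearOrder L] {n : ℕ} (hn : 1 ≤ n)
    (μ lam : YoungDiagram) (horiz : L → Prop) (q : Rˣ) (z : L → R) (N : ℕ)
    (hN : ∀ i j : ℕ, (i, j) ∈ lam → i < N ∧ j < N) :
    superLLT n μ lam L (fun a b => a ≤ b) horiz (q : R) z =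
      ((Finset.univ : Finset L).toList.map (letterOp n q horiz z N)).prod
        (Finsupp.single (rho μ) 1) (rho lam) := by
  classical
  set l := (Finset.univ : Finset L).sort (fun a b => a ≥ b) with hl
  set K := l.flatMap (block horiz N) with hK
  have hKmem : ∀ (a : L) (i j : ℕ), (i, j) ∈ lam → (a, (j : ℤ) - i) ∈ K := by
    intro a i j hij
    have := hN i j hij
    refine List.mem_flatMap.2 ⟨a, by simp [hl], mem_block.2 ⟨rfl, ?_, ?_⟩⟩ <;> simp only <;> omega
  have hKsort : K.Pairwise fun k k' => flatLT horiz k' k := by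
    rw [hK, List.pairwise_flatMap]
    refine ⟨fun a _ => pairwise_block horiz N a,
      (Finset.sortedGT_sort (Finset.univ : Finset L)).pairwise.imp fun {a b} hab k hk k' hk' => ?_⟩
    rw [mem_block] at hk hk'
    exact Or.inl (by rw [hk.1, hk'.1]; exact hab)
  have hset : superTableaux n μ lam L (fun a b => a ≤ b) horiz =
      flatTableaux n (flatLT horiz) μ lam K := by
    ext T
    rw [superTableaux, flatTableaux, Finset.mem_filter, Finset.mem_filter, isSuperTableau_iff,
      isTab_iff_isFlat hn K hKmem]
  rw [superLLT, hset, Finset.sum_congr rfl fun T _ => weight_eq_prod horiz (q : R) z T,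
    sum_flatTableaux q (signedVar horiz z) hn (flatLT_asymm horiz) K hKsort]
  have hprod : (K.map fun k => (1 + signedVar horiz z k.1 • ribOp n q k.2 :
      Module.End R ((ℤ → ℤ) →₀ R))).prod = (l.map (letterOp n q horiz z N)).prod := by
    rw [hK]
    clear_value l
    clear hKmem hKsort hset hK hl
    induction l with
    | nil => rfl
    | cons a l ih =>
      rw [List.flatMap_cons, List.map_append, List.prod_append, prod_block, ih, List.map_cons,
        List.prod_cons]
  rw [hprod, ((Finset.sort_perm_toList (Finset.univ : Finset L) (fun a b => a ≥ b)).map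
    (letterOp n q horiz z N)).prod_eq']
  rw [List.pairwise_map]
  exact List.pairwise_of_forall fun a b => letterOp_commute n hn q horiz z N a b

/-- Super LLT polynomials do not depend on the total order of the alphabet. -/
lemma superLLT_order_indep [Fintype L] (o o' : LinearOrder L) {n : ℕ} (hn : 1 ≤ n)
    (μ lam : YoungDiagram) (horiz : L → Prop) (q : Rˣ) (z : L → R) :
    superLLT n μ lam L o.le horiz (q : R) z = superLLT n μ lam L o'.le horiz (q : R) z := by
  obtain ⟨N, hN⟩ : ∃ N : ℕ, ∀ i j : ℕ, (i, j) ∈ lam → i < N ∧ j < N := by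
    refine ⟨lam.cells.sup (fun c => max c.1 c.2) + 1, fun i j hij => ?_⟩
    have := Finset.le_sup (f := fun c : ℕ × ℕ => max c.1 c.2)
      ((YoungDiagram.mem_cells _).2 hij)
    simp only [max_le_iff] at this
    omega
  exact (@superLLT_eq_letterOp L R _ _ o n hn μ lam horiz q z N hN).trans
    (@superLLT_eq_letterOp L R _ _ o' n hn μ lam horiz q z N hN).symm

end OrderIndependence

section Conjugation

variable {L L' : Type*} {n : ℕ} {μ lam : YoungDiagram}

lemma IsTab.card_eq [LinearOrder L] {horiz : L → Prop} {T : Finset (Finset (ℕ × ℕ) × L)}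
    (h : IsTab n μ lam horiz T) : lam.cells.card = μ.cells.card + n * T.card := by
  classical
  have h1 : T.biUnion (fun p => p.1) = lam.cells \ μ.cells := by
    ext c
    rw [Finset.mem_biUnion, h.cover, Finset.mem_sdiff, YoungDiagram.mem_cells,
      YoungDiagram.mem_cells]
  have h2 : (T.biUnion (fun p => p.1)).card = ∑ p ∈ T, p.1.card :=
    Finset.card_biUnion fun p hp p' hp' hne => h.disj p hp p' hp' hne
  rw [Finset.sum_congr rfl fun p hp => (h.ribbon p hp).1, Finset.sum_const, smul_eq_mul, h1] at h2
  have h3 : (lam.cells \ μ.cells).card + μ.cells.card = lam.cells.card :=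
    Finset.card_sdiff_add_card_eq_card h.le
  rw [← h3, h2]
  ring

lemma mem_superTableaux [LinearOrder L] [Fintype L] {horiz : L → Prop}
    {T : Finset (Finset (ℕ × ℕ) × L)} :
    T ∈ superTableaux n μ lam L (fun a b => a ≤ b) horiz ↔ IsTab n μ lam horiz T := by
  classical
  rw [superTableaux, Finset.mem_filter, isSuperTableau_iff, and_iff_right_iff_imp]
  intro h
  rw [Finset.mem_powerset]
  intro p hp
  refine Finset.mem_product.2 ⟨Finset.mem_powerset.2 fun c hc => ?_, Finset.mem_univ _⟩
  rw [Finset.mem_sdiff, YoungDiagram.mem_cells, YoungDiagram.mem_cells]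
  exact (h.cover c).1 ⟨p, hp, hc⟩

/-- The conjugation formula when the two alphabets carry corresponding orders: transposition
is a weight-preserving bijection, up to the sign and the power of `q`. -/
lemma superLLT_transpose [LinearOrder L] [Fintype L] [LinearOrder L'] [Fintype L']
    (hn : 1 ≤ n) {d : ℕ} (hd : lam.cells.card = μ.cells.card + n * d) (e : L ≃ L')
    (he : ∀ a b, e a ≤ e b ↔ a ≤ b) {horiz : L → Prop} {horiz' : L' → Prop}
    (hh : ∀ a, horiz' (e a) ↔ ¬horiz a) {R : Type*} [CommRing R] {q u : R} (hqu : q * u = 1)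
    {z : L → R} {z' : L' → R} (hz : ∀ a, z' (e a) = z a) :
    superLLT n μ lam L (fun a b => a ≤ b) horiz q z =
      (-1 : R) ^ d * q ^ ((n - 1) * d) *
        superLLT n μ.transpose lam.transpose L' (fun a b => a ≤ b) horiz' u z' := by
  classical
  have he' : ∀ a b, e.symm a ≤ e.symm b ↔ a ≤ b := fun a b => by
    rw [← he, e.apply_symm_apply, e.apply_symm_apply]
  have hh' : ∀ a, horiz (e.symm a) ↔ ¬horiz' a := fun a => by
    have := hh (e.symm a)
    rw [e.apply_symm_apply] at this
    tauto
  rw [superLLT, superLLT, Finset.mul_sum]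
  refine Finset.sum_equiv (trTab e) (fun T => ?_) (fun T hT => ?_)
  · rw [mem_superTableaux, mem_superTableaux]
    refine ⟨fun h => h.tr hn e he hh, fun h => ?_⟩
    have := h.tr hn e.symm he' hh'
    rwa [YoungDiagram.transpose_transpose, YoungDiagram.transpose_transpose, ← trTab_symm,
      Equiv.symm_apply_apply] at this
  · have h := mem_superTableaux.1 hT
    have hcard : T.card = d := by
      have := h.card_eq
      exact Nat.eq_of_mul_eq_mul_left hn (by omega)
    rw [weight_eq_prod, weight_eq_prod, pow_mul, ← mul_pow, ← hcard, ← Finset.prod_const,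
      trTab, Equiv.finsetCongr_apply, Finset.prod_map, ← Finset.prod_mul_distrib]
    refine Finset.prod_congr rfl fun p hp => ?_
    have hs := spin_tr hn (h.ribbon p hp)
    have hsign : signedVar horiz' z' (e p.2) = -signedVar horiz z p.2 := by
      rw [signedVar, signedVar, hz]
      by_cases hp : horiz p.2 <;> simp [hh, hp]
    have hone : q ^ spin (tr p.1) * u ^ spin (tr p.1) = 1 := by rw [← mul_pow, hqu, one_pow]
    simp only [Equiv.coe_toEmbedding, Equiv.prodCongr_apply, Prod.map, hsign]
    rw [← hs, pow_add]
    linear_combination (-(signedVar horiz z p.2 * q ^ spin p.1)) * hone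

end Conjugation
end SuperLLT

namespace SuperLLT

/-- **Conjugation formula for super LLT polynomials** (`prop:flipover`).
Let `n ≥ 1` and let `lam/μ` be a skew shape with `|lam| - |μ| = n * d`.  Then
`G_{lam/μ}(X/Y; q) = (-1)^d * q^((n-1) d) * G_{lam'/μ'}(Y/X; q⁻¹)`, where `lam'`, `μ'`
are the conjugate partitions and on the right-hand side the roles of the alphabets are
exchanged: the horizontal alphabet has `s` letters carrying the variables `y`, and the
vertical alphabet has `r` letters carrying the variables `x`.  This is stated in any
commutative ring in which `q` has an inverse `u`, and with arbitrary total orders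
(refining the natural orders of the two alphabets) on either side. -/
theorem superLLT_conjugate (n : ℕ) (hn : 1 ≤ n) (μ lam : YoungDiagram) (hμlam : μ ≤ lam)
    (d : ℕ) (hd : lam.cells.card = μ.cells.card + n * d) (r s : ℕ)
    (ord : LinearOrder (Fin r ⊕ Fin s))
    (hordA : ∀ i j : Fin r, i ≤ j → ord.le (Sum.inl i) (Sum.inl j))
    (hordA' : ∀ i j : Fin s, i ≤ j → ord.le (Sum.inr i) (Sum.inr j))
    (ord' : LinearOrder (Fin s ⊕ Fin r))
    (hord'A : ∀ i j : Fin s, i ≤ j → ord'.le (Sum.inl i) (Sum.inl j))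
    (hord'A' : ∀ i j : Fin r, i ≤ j → ord'.le (Sum.inr i) (Sum.inr j))
    (R : Type*) [CommRing R] (q u : R) (hqu : q * u = 1)
    (x : Fin r → R) (y : Fin s → R) :
    superLLT n μ lam (Fin r ⊕ Fin s) ord.le (fun a => a.isLeft = true) q (Sum.elim x y) =
      (-1 : R) ^ d * q ^ ((n - 1) * d) *
        superLLT n μ.transpose lam.transpose (Fin s ⊕ Fin r) ord'.le
          (fun a => a.isLeft = true) u (Sum.elim y x) := by
  -- Order independence allows the order of the left-hand side to be pulled back from `ord'`.
  let e : Fin r ⊕ Fin s ≃ Fin s ⊕ Fin r := Equiv.sumComm _ _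
  let o : LinearOrder (Fin r ⊕ Fin s) := @LinearOrder.lift' _ _ ord' e e.injective
  refine (superLLT_order_indep ord o hn μ lam _ (Units.mkOfMulEqOne q u hqu) _).trans ?_
  refine @superLLT_transpose _ _ n μ lam o _ ord' _ hn d hd e (fun _ _ => Iff.rfl) _ _ ?_ R _ q u
    hqu _ _ ?_
  · rintro (a | a) <;> simp [e]
  · rintro (a | a) <;> simp [e]

end SuperLLT
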